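/- arXiv:2603.24760 — 5 statements merged into one kernel-verified Lean document; each statement's English description precedes it below -/
import Mathlib

section
/- Let Ω ⊂ ℝ^N (N ≥ 2) be a bounded connected open set, and let f : ℝ → ℝ be continuously differentiable. Suppose there exists ξ ∈ ℝ with f(ξ) = 0 such that f(t)·(t − ξ) ≤ 0 for all t ∈ ℝ. Then every weak Neumann solution u of −Δu = f(u) in Ω is constant on the closure of Ω, and its constant value is a root of f. -/
open MeasureTheory Bornology
open scoped RealInnerProductSpace

/-- If `f` has a root `ξ` with `f(t)(t-ξ) ≤ 0` for all `t`, then every weak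
Neumann solution of `-Δu = f(u)` in a bounded connected open set `Ω ⊆ ℝ^N`, `N ≥ 2`, is
constant on `closure Ω` and its value is a root of `f`. -/
theorem stmt_0 {N : ℕ} (hN : 2 ≤ N)
    (Ω : Set (EuclideanSpace ℝ (Fin N))) (hΩ_open : IsOpen Ω)
    (hΩ_bdd : IsBounded Ω) (hΩ_conn : IsConnected Ω)
    (f : ℝ → ℝ) (hf : ContDiff ℝ 1 f)
    (ξ : ℝ) (hξ : f ξ = 0) (hsign : ∀ t : ℝ, f t * (t - ξ) ≤ 0)
    (u : EuclideanSpace ℝ (Fin N) → ℝ)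
    (V : Set (EuclideanSpace ℝ (Fin N))) (hV_open : IsOpen V)
    (hV : closure Ω ⊆ V) (hu : ContDiffOn ℝ 1 u V)
    (hweak : ∀ φ : EuclideanSpace ℝ (Fin N) → ℝ, ContDiff ℝ 1 φ →
      ∫ x in Ω, ⟪gradient u x, gradient φ x⟫ = ∫ x in Ω, f (u x) * φ x) :
    ∃ c : ℝ, f c = 0 ∧ ∀ x ∈ closure Ω, u x = c := by
  have hcl : IsCompact (closure Ω) := hΩ_bdd.isCompact_closure
  have hsub : Ω ⊆ V := subset_closure.trans hV
  obtain ⟨K, hK, hΩK, hKV⟩ := exists_compact_between hcl hV_open hV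
  obtain ⟨χ, hχ0, hχ1, -⟩ := exists_contMDiffMap_zero_one_of_isClosed
    (n := 1) (modelWithCornersSelf ℝ (EuclideanSpace ℝ (Fin N)))
    (s := (interior K)ᶜ) (t := closure Ω) isOpen_interior.isClosed_compl isClosed_closure
    (Set.disjoint_left.2 fun x hx hx' => hx (hΩK hx'))
  have hχd : ContDiff ℝ 1 χ := χ.contMDiff.contDiff
  -- the test function
  have hφ : ContDiff ℝ 1 (fun x => χ x * (u x - ξ)) := by
    rw [contDiff_iff_contDiffAt]
    intro x
    by_cases hx : x ∈ V
    · exact hχd.contDiffAt.mul ((hu.contDiffAt (hV_open.mem_nhds hx)).sub contDiffAt_const)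
    · have hxK : Kᶜ ∈ nhds x := hK.isClosed.isOpen_compl.mem_nhds fun h => hx (hKV h)
      refine (contDiffAt_const (c := (0 : ℝ))).congr_of_eventuallyEq ?_
      filter_upwards [hxK] with y hy
      have : χ y = 0 := hχ0 fun h => hy (interior_subset h)
      simp [this]
  have hcont : ContinuousOn (fun x => gradient u x) V := by
    have h := hu.continuousOn_fderiv_of_isOpen hV_open le_rfl
    exact (InnerProductSpace.toDual ℝ
      (EuclideanSpace ℝ (Fin N))).symm.continuous.comp_continuousOn h
  have h1 := hweak _ hφ
  have hL : ∫ x in Ω, ⟪gradient u x, gradient (fun x => χ x * (u x - ξ)) x⟫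
      = ∫ x in Ω, ⟪gradient u x, gradient u x⟫ := by
    refine setIntegral_congr_fun hΩ_open.measurableSet fun x hx => ?_
    have he : (fun x => χ x * (u x - ξ)) =ᶠ[nhds x] fun x => u x - ξ := by
      filter_upwards [hΩ_open.mem_nhds hx] with y hy
      have : χ y = 1 := hχ1 (subset_closure hy)
      simp [this]
    have hg : gradient (fun x => u x - ξ) x = gradient u x := by
      simp [gradient, fderiv_sub_const]
    simp only [he.gradient_eq, hg]
  have hR : ∫ x in Ω, f (u x) * (χ x * (u x - ξ)) ≤ 0 := by
    refine setIntegral_nonpos hΩ_open.measurableSet fun x hx => ?_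
    have : χ x = 1 := hχ1 (subset_closure hx)
    simpa [this] using hsign (u x)
  have hci : ContinuousOn (fun x => ⟪gradient u x, gradient u x⟫) V := hcont.inner hcont
  have hint : IntegrableOn (fun x => ⟪gradient u x, gradient u x⟫) Ω :=
    ((hci.mono hV).integrableOn_compact hcl).mono_set subset_closure
  have hnn : ∀ x, 0 ≤ ⟪gradient u x, gradient u x⟫ := fun x => real_inner_self_nonneg
  have hz : ∫ x in Ω, ⟪gradient u x, gradient u x⟫ = 0 :=
    le_antisymm (by rw [← hL, h1]; exact hR) (integral_nonneg hnn)
  have hae := (setIntegral_eq_zero_iff_of_nonneg_ae (Filter.Eventually.of_forall hnn) hint).1 hz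
  have heq := Measure.eqOn_open_of_ae_eq hae hΩ_open (hci.mono hsub) continuousOn_const
  have hfd : Set.EqOn (fderiv ℝ u) 0 Ω := by
    intro x hx
    have h : gradient u x = 0 := inner_self_eq_zero.1 (heq hx)
    simpa [gradient] using h
  obtain ⟨c, hc⟩ := hΩ_open.exists_is_const_of_fderiv_eq_zero hΩ_conn.isPreconnected
    ((hu.differentiableOn one_ne_zero).mono hsub) hfd
  refine ⟨c, ?_, ?_⟩
  · have h2 := hweak (fun _ => 1) contDiff_const
    have h3 : ∫ x in Ω, f (u x) * 1 = ∫ x in Ω, f c :=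
      setIntegral_congr_fun hΩ_open.measurableSet fun x hx => by simp [hc x hx]
    rw [h3] at h2
    simp only [gradient_fun_const, inner_zero_right, integral_zero, setIntegral_const,
      smul_eq_mul] at h2
    have hpos : 0 < volume.real Ω :=
      ENNReal.toReal_pos (hΩ_open.measure_pos volume hΩ_conn.nonempty).ne'
        hΩ_bdd.measure_lt_top.ne
    exact (mul_eq_zero.1 h2.symm).resolve_left hpos.ne'
  · have : Set.EqOn u (fun _ => c) (closure Ω) :=
      Set.EqOn.of_subset_closure (fun x hx => hc x hx) (hu.continuousOn.mono hV)
        continuousOn_const subset_closure le_rfl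
    exact this
end

section
/- Let Ω ⊂ ℝ^N (N ≥ 2) be a bounded connected open set, and let f : ℝ → ℝ be continuously differentiable with f(t) = p(t)·φ(t) for all t, where p : ℝ → ℝ satisfies p(t) > 0 for all t and φ : ℝ → ℝ is continuous and nonincreasing. Then every weak Neumann solution of −Δu = f(u) in Ω is constant on the closure of Ω. -/
open MeasureTheory Bornology
open scoped RealInnerProductSpace

lemma aux_zero {N : ℕ} (Ω : Set (EuclideanSpace ℝ (Fin N))) (ho : IsOpen Ω)
    (hb : IsBounded Ω) (g : EuclideanSpace ℝ (Fin N) → ℝ) (hg : ContinuousOn g (closure Ω))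
    (h0 : ∀ x ∈ Ω, 0 ≤ g x) (hi : ∫ x in Ω, g x ≤ 0) : ∀ x ∈ Ω, g x = 0 := by
  have hint : IntegrableOn g Ω :=
    (hg.integrableOn_compact hb.isCompact_closure).mono_set subset_closure
  have hnn : 0 ≤ᵐ[volume.restrict Ω] g :=
    (ae_restrict_iff' ho.measurableSet).2 (Filter.Eventually.of_forall h0)
  have hz : ∫ x in Ω, g x = 0 := le_antisymm hi (integral_nonneg_of_ae hnn)
  have hae := (integral_eq_zero_iff_of_nonneg_ae hnn hint).1 hz
  exact Measure.eqOn_open_of_ae_eq hae ho (hg.mono subset_closure) continuousOn_const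

lemma aux_ext {N : ℕ} (K V : Set (EuclideanSpace ℝ (Fin N))) (hK : IsClosed K)
    (hV : IsOpen V) (hKV : K ⊆ V) (w : EuclideanSpace ℝ (Fin N) → ℝ)
    (hw : ContDiffOn ℝ 1 w V) :
    ∃ W : EuclideanSpace ℝ (Fin N) → ℝ, ContDiff ℝ 1 W ∧ ∀ x ∈ K, W x = w x := by
  obtain ⟨V', hV'o, hKV', hV'V⟩ := normal_exists_closure_subset hK hV hKV
  obtain ⟨ψ, h0, h1, -⟩ := exists_contMDiffMap_zero_one_of_isClosed (n := 1)
    (modelWithCornersSelf ℝ (EuclideanSpace ℝ (Fin N)))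
    hV'o.isClosed_compl hK (Set.disjoint_compl_left_iff_subset.2 hKV')
  have hψ : ContDiff ℝ 1 ψ := ψ.contMDiff.contDiff
  refine ⟨fun x => ψ x * w x, ?_, fun x hx => by simp [h1 hx]⟩
  rw [contDiff_iff_contDiffAt]
  intro x
  by_cases hx : x ∈ V
  · exact hψ.contDiffAt.mul (hw.contDiffAt (hV.mem_nhds hx))
  · have : (fun x => ψ x * w x) =ᶠ[nhds x] fun _ => 0 := by
      filter_upwards [isClosed_closure.isOpen_compl.mem_nhds (fun h => hx (hV'V h))] with y hy
      have : ψ y = 0 := h0 (fun h => hy (subset_closure h))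
      simp [this]
    exact contDiffAt_const.congr_of_eventuallyEq this

/-- If `f = p·φ` with `p > 0` and `φ` continuous nonincreasing, then every
weak Neumann solution of `-Δu = f(u)` in a bounded connected open `Ω ⊆ ℝ^N`, `N ≥ 2`, is
constant on `closure Ω`. -/
theorem stmt_1 {N : ℕ} (hN : 2 ≤ N)
    (Ω : Set (EuclideanSpace ℝ (Fin N))) (hΩ_open : IsOpen Ω)
    (hΩ_bdd : IsBounded Ω) (hΩ_conn : IsConnected Ω)
    (f p φ₀ : ℝ → ℝ) (hf : ContDiff ℝ 1 f)
    (hfact : ∀ t : ℝ, f t = p t * φ₀ t)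
    (hp : ∀ t : ℝ, 0 < p t)
    (hφ₀_cont : Continuous φ₀) (hφ₀_mono : Antitone φ₀)
    (u : EuclideanSpace ℝ (Fin N) → ℝ)
    (V : Set (EuclideanSpace ℝ (Fin N))) (hV_open : IsOpen V)
    (hV : closure Ω ⊆ V) (hu : ContDiffOn ℝ 1 u V)
    (hweak : ∀ φ : EuclideanSpace ℝ (Fin N) → ℝ, ContDiff ℝ 1 φ →
      ∫ x in Ω, ⟪gradient u x, gradient φ x⟫ = ∫ x in Ω, f (u x) * φ x) :
    ∃ c : ℝ, ∀ x ∈ closure Ω, u x = c := by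
  have hsub : Ω ⊆ V := subset_closure.trans hV
  have huc : ContinuousOn u (closure Ω) := hu.continuousOn.mono hV
  have hfu : ContinuousOn (fun x => f (u x)) (closure Ω) := hf.continuous.comp_continuousOn huc
  obtain ⟨x₀, hx₀⟩ := hΩ_conn.nonempty
  have hint0 : ∫ x in Ω, f (u x) = 0 := by
    have := hweak (fun _ => 1) contDiff_const
    simpa [gradient] using this.symm
  have hzero : ∃ a, φ₀ a = 0 := by
    by_contra hne
    push Not at hne
    have hfne : f (u x₀) ≠ 0 := by rw [hfact]; exact mul_ne_zero (hp _).ne' (hne _)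
    rcases lt_or_gt_of_ne (hne 0) with h | h
    · have hneg : ∀ t, φ₀ t < 0 := by
        intro t
        by_contra ht
        obtain ⟨a, ha⟩ := mem_range_of_exists_le_of_exists_ge hφ₀_cont ⟨0, h.le⟩ ⟨t, not_lt.1 ht⟩
        exact hne a ha
      have := aux_zero Ω hΩ_open hΩ_bdd (fun x => - f (u x)) hfu.neg
        (fun x _ => by
          have := mul_neg_of_pos_of_neg (hp (u x)) (hneg (u x))
          rw [← hfact] at this
          linarith)
        (by rw [integral_neg, hint0]; simp) x₀ hx₀
      exact hfne (neg_eq_zero.1 this)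
    · have hpos : ∀ t, 0 < φ₀ t := by
        intro t
        by_contra ht
        obtain ⟨a, ha⟩ := mem_range_of_exists_le_of_exists_ge hφ₀_cont ⟨t, not_lt.1 ht⟩ ⟨0, h.le⟩
        exact hne a ha
      exact hfne (aux_zero Ω hΩ_open hΩ_bdd (fun x => f (u x)) hfu
        (fun x _ => by
          have := mul_pos (hp (u x)) (hpos (u x))
          rw [← hfact] at this
          exact this.le) hint0.le x₀ hx₀)
  obtain ⟨a, ha⟩ := hzero
  have hsign : ∀ t, f t * (t - a) ≤ 0 := by
    intro t
    rw [hfact, mul_assoc]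
    refine mul_nonpos_of_nonneg_of_nonpos (hp t).le ?_
    rcases le_total t a with h | h
    · exact mul_nonpos_of_nonneg_of_nonpos (ha ▸ hφ₀_mono h) (sub_nonpos.2 h)
    · exact mul_nonpos_of_nonpos_of_nonneg (ha ▸ hφ₀_mono h) (sub_nonneg.2 h)
  obtain ⟨W, hW, hWu⟩ := aux_ext (closure Ω) V isClosed_closure hV_open hV
    (fun x => u x - a) (hu.sub contDiffOn_const)
  have hgradW : ∀ x ∈ Ω, gradient W x = gradient u x := by
    intro x hx
    have : W =ᶠ[nhds x] fun y => u y - a := by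
      filter_upwards [hΩ_open.mem_nhds hx] with y hy using hWu y (subset_closure hy)
    unfold gradient
    rw [this.fderiv_eq, fderiv_sub_const]
  have hE : ∫ x in Ω, ⟪gradient u x, gradient u x⟫ ≤ 0 := by
    have h1 : ∫ x in Ω, ⟪gradient u x, gradient u x⟫ = ∫ x in Ω, ⟪gradient u x, gradient W x⟫ :=
      setIntegral_congr_fun hΩ_open.measurableSet (fun x hx => by simp only [hgradW x hx])
    rw [h1, hweak W hW]
    refine setIntegral_nonpos hΩ_open.measurableSet (fun x hx => ?_)
    rw [hWu x (subset_closure hx)]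
    exact hsign _
  have hgc : ContinuousOn (gradient u) (closure Ω) := by
    have := (hu.continuousOn_fderiv_of_isOpen hV_open le_rfl).mono hV
    exact (InnerProductSpace.toDual ℝ _).symm.continuous.comp_continuousOn this
  have hz := aux_zero Ω hΩ_open hΩ_bdd _ (hgc.inner hgc) (fun x _ => real_inner_self_nonneg) hE
  have hfd : Set.EqOn (fderiv ℝ u) 0 Ω := by
    intro x hx
    have h := inner_self_eq_zero.1 (hz x hx)
    simpa [gradient] using h
  obtain ⟨c, hc⟩ := hΩ_open.exists_is_const_of_fderiv_eq_zero hΩ_conn.isPreconnected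
    ((hu.differentiableOn one_ne_zero).mono hsub) hfd
  refine ⟨c, fun x hx => ?_⟩
  have : Set.EqOn u (fun _ => c) (closure Ω) :=
    Set.EqOn.of_subset_closure (fun x hx => hc x hx) huc continuousOn_const subset_closure le_rfl
  exact this hx
end

section
/- (Casten–Holland, Matano) Let Ω ⊂ ℝ^N (N ≥ 2) be a bounded convex open set with boundary of class C², and let f : ℝ → ℝ be continuously differentiable. If u is a weak Neumann solution of −Δu = f(u) in Ω which is of class C² on the closure of Ω and is stable, i.e. ∫_Ω |∇φ|² dx − ∫_Ω f′(u) φ² dx ≥ 0 for every continuously differentiable φ : ℝ^N → ℝ, then u is constant on the closure of Ω. -/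
open MeasureTheory Bornology
open scoped RealInnerProductSpace

/-- `g` is a local `C²` defining function for `Ω` near the boundary point `x`:
`g` is `C²` on the open neighborhood `U` of `x`, with nonvanishing gradient, and
`Ω ∩ U = {g < 0} ∩ U`.  A bounded open set has boundary of class `C²` if such a defining
function exists near every boundary point. -/
def IsC2LocalDefining {N : ℕ} (Ω : Set (EuclideanSpace ℝ (Fin N)))
    (x : EuclideanSpace ℝ (Fin N)) (U : Set (EuclideanSpace ℝ (Fin N)))
    (g : EuclideanSpace ℝ (Fin N) → ℝ) : Prop :=
  IsOpen U ∧ x ∈ U ∧ ContDiffOn ℝ 2 g U ∧ (∀ y ∈ U, gradient g y ≠ 0) ∧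
    Ω ∩ U = {y ∈ U | g y < 0}

namespace CH

/-- Cauchy-Schwarz for the trace. -/
lemma trace_cs {ι E : Type*} [Fintype ι] [Nonempty ι] [NormedAddCommGroup E]
    [InnerProductSpace ℝ E] (b : OrthonormalBasis ι ℝ E) (A : E →L[ℝ] E) (m : E) (hm : ‖m‖ ≤ 1) :
    (∑ j, ⟪A (b j), b j⟫ - ⟪A m, m⟫) ^ 2 ≤
      (Fintype.card ι : ℝ) * (∑ j, ‖A (b j)‖ ^ 2 - ∑ j, ⟪A (b j), m⟫ ^ 2) := by
  set T := ∑ j, ⟪A (b j), b j⟫ - ⟪A m, m⟫ with hT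
  set G := ∑ j, ‖A (b j)‖ ^ 2 - ∑ j, ⟪A (b j), m⟫ ^ 2 with hG
  set n : ℝ := (Fintype.card ι : ℝ) with hn
  have hn0 : 0 < n := by rw [hn]; exact_mod_cast Fintype.card_pos
  have h1 : ∑ j, ⟪A (b j), m⟫ * ⟪b j, m⟫ = ⟪A m, m⟫ := by
    conv_rhs => rw [← b.sum_repr' m]
    rw [map_sum, sum_inner]
    refine Finset.sum_congr rfl fun j _ => ?_
    rw [map_smul, real_inner_smul_left, b.sum_repr' m]; ring
  have h2 : ∑ j, ⟪b j, m⟫ ^ 2 = ‖m‖ ^ 2 := b.sum_sq_inner_right m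
  have key : ∀ s : ℝ, 0 ≤ G + 2 * s * T + s ^ 2 * (n - ‖m‖ ^ 2) := by
    intro s
    have h3 : ∀ j, 0 ≤ ‖A (b j) + s • b j‖ ^ 2 - ⟪A (b j) + s • b j, m⟫ ^ 2 := by
      intro j
      have := abs_real_inner_le_norm (A (b j) + s • b j) m
      have h4 : |⟪A (b j) + s • b j, m⟫| ≤ ‖A (b j) + s • b j‖ := this.trans
        (mul_le_of_le_one_right (norm_nonneg _) hm)
      have := sq_le_sq' (by linarith [abs_nonneg ⟪A (b j) + s • b j, m⟫, norm_nonneg (A (b j) + s • b j)]) h4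
      rw [sq_abs] at this
      linarith
    have h5 := Finset.sum_nonneg (s := Finset.univ) fun j _ => h3 j
    have h6 : ∀ j, ‖A (b j) + s • b j‖ ^ 2 - ⟪A (b j) + s • b j, m⟫ ^ 2
        = ‖A (b j)‖ ^ 2 - ⟪A (b j), m⟫ ^ 2 + 2 * s * (⟪A (b j), b j⟫ - ⟪A (b j), m⟫ * ⟪b j, m⟫)
          + s ^ 2 * (1 - ⟪b j, m⟫ ^ 2) := by
      intro j
      rw [norm_add_sq_real, inner_add_left, real_inner_smul_left, real_inner_smul_right,
        norm_smul, b.norm_eq_one, mul_one, Real.norm_eq_abs, sq_abs]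
      ring
    simp only [h6] at h5
    rw [Finset.sum_add_distrib, Finset.sum_add_distrib, ← Finset.mul_sum, ← Finset.mul_sum,
      Finset.sum_sub_distrib, Finset.sum_sub_distrib, Finset.sum_sub_distrib, h1, h2] at h5
    simpa [hG, hT, hn] using h5
  have h7 := key (-T / n)
  have h8 : (-T / n) ^ 2 * (n - ‖m‖ ^ 2) ≤ (-T / n) ^ 2 * n :=
    mul_le_mul_of_nonneg_left (by nlinarith [sq_nonneg ‖m‖]) (sq_nonneg _)
  have h9 : 0 ≤ G + 2 * (-T / n) * T + (-T / n) ^ 2 * n := by linarith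
  have h10 : G + 2 * (-T / n) * T + (-T / n) ^ 2 * n = (n * G - T ^ 2) / n := by
    field_simp; ring
  rw [h10, div_nonneg_iff] at h9
  rcases h9 with h9 | h9 <;> linarith [h9.1, h9.2]

lemma prod_expand {ι : Type*} (s : Finset ι) :
    ∃ C : ℝ, 0 ≤ C ∧ ∀ (x : ι → ℝ) (τ : ℝ), 0 ≤ τ → τ ≤ 1 → (∀ i, |x i| ≤ τ) →
      |∑ i ∈ s, x i| ≤ C * τ ∧ ∑ i ∈ s, x i ^ 2 ≤ C * τ ^ 2 ∧
      |∏ i ∈ s, (1 + x i) - (1 + ∑ i ∈ s, x i + ((∑ i ∈ s, x i) ^ 2 - ∑ i ∈ s, x i ^ 2) / 2)|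
        ≤ C * τ ^ 3 := by
  classical
  induction s using Finset.induction_on with
  | empty => exact ⟨0, le_rfl, fun x τ h1 h2 h3 => by simp⟩
  | insert a s ha ih =>
    obtain ⟨C, hC, h⟩ := ih
    refine ⟨C + 1 + (C ^ 2 + C) + 2 * C, by positivity, fun x τ h1 h2 h3 => ?_⟩
    obtain ⟨h4, h5, h6⟩ := h x τ h1 h2 h3
    rw [Finset.sum_insert ha, Finset.sum_insert ha, Finset.prod_insert ha]
    set S1 := ∑ i ∈ s, x i
    set S2 := ∑ i ∈ s, x i ^ 2 with hS2
    set P := ∏ i ∈ s, (1 + x i)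
    have hS20 : 0 ≤ S2 := Finset.sum_nonneg fun i _ => sq_nonneg _
    have hx := h3 a
    have hx2 : x a ^ 2 ≤ τ ^ 2 := by rw [← sq_abs]; gcongr
    have hS1 : S1 ^ 2 ≤ (C * τ) ^ 2 := by rw [← sq_abs]; gcongr
    have hτ3 : 0 ≤ τ ^ 3 := by positivity
    refine ⟨?_, ?_, ?_⟩
    · refine (abs_add_le _ _).trans ?_
      nlinarith [mul_nonneg hC h1, mul_nonneg (sq_nonneg C) h1]
    · nlinarith [mul_nonneg hC (sq_nonneg τ), mul_nonneg (sq_nonneg C) (sq_nonneg τ)]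
    · have e : (1 + x a) * P - (1 + (x a + S1) + ((x a + S1) ^ 2 - (x a ^ 2 + S2)) / 2)
          = x a * ((S1 ^ 2 - S2) / 2) + (1 + x a) * (P - (1 + S1 + (S1 ^ 2 - S2) / 2)) := by ring
      rw [e]
      refine (abs_add_le _ _).trans ?_
      rw [abs_mul, abs_mul]
      have b1 : |(S1 ^ 2 - S2) / 2| ≤ (C ^ 2 + C) * τ ^ 2 := by
        rw [abs_le]; constructor <;> nlinarith [sq_nonneg S1]
      have b2 : |1 + x a| ≤ 2 := by
        refine (abs_add_le _ _).trans ?_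
        rw [abs_one]; linarith
      have c1 : |x a| * |(S1 ^ 2 - S2) / 2| ≤ τ * ((C ^ 2 + C) * τ ^ 2) := by gcongr
      have c2 : |1 + x a| * |P - (1 + S1 + (S1 ^ 2 - S2) / 2)| ≤ 2 * (C * τ ^ 3) := by gcongr
      nlinarith [mul_nonneg hC hτ3]

lemma det_expand {E : Type*} [NormedAddCommGroup E] {ι : Type*} [Fintype ι]
    [InnerProductSpace ℝ E] [FiniteDimensional ℝ E] (b : OrthonormalBasis ι ℝ E) (M : ℝ)
    (hM : 0 ≤ M) :
    ∃ C : ℝ, 0 ≤ C ∧ ∀ (A : E →L[ℝ] E) (t : ℝ), (∀ v w, ⟪A v, w⟫ = ⟪v, A w⟫) → ‖A‖ ≤ M →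
      0 ≤ t → t * M ≤ 1 →
      |(ContinuousLinearMap.id ℝ E + t • A).det| ≤ 1 + t * (∑ j, ⟪A (b j), b j⟫)
        + t ^ 2 / 2 * ((∑ j, ⟪A (b j), b j⟫) ^ 2 - ∑ j, ‖A (b j)‖ ^ 2) + C * t ^ 3 := by
  obtain ⟨C, hC, h⟩ := prod_expand (Finset.univ : Finset (Fin (Module.finrank ℝ E)))
  refine ⟨C * M ^ 3, by positivity, fun A t hA hAM ht htM => ?_⟩
  have hS : (A : E →ₗ[ℝ] E).IsSymmetric := hA
  set e := hS.eigenvectorBasis rfl with he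
  set lam := hS.eigenvalues rfl with hlam
  have hae : ∀ i, A (e i) = lam i • e i := fun i => hS.apply_eigenvectorBasis rfl i
  have hlamM : ∀ i, |t * lam i| ≤ t * M := by
    intro i
    have := A.le_opNorm (e i)
    rw [hae, norm_smul, e.norm_eq_one, mul_one, mul_one, Real.norm_eq_abs] at this
    rw [abs_mul, abs_of_nonneg ht]
    gcongr
    exact this.trans hAM
  have htr : ∑ j, ⟪A (b j), b j⟫ = ∑ i, lam i := by
    have h1 := LinearMap.trace_eq_sum_inner (A : E →ₗ[ℝ] E) b
    have h2 := LinearMap.trace_eq_sum_inner (A : E →ₗ[ℝ] E) e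
    rw [h1] at h2
    simp only [ContinuousLinearMap.coe_coe] at h2
    have h3 : ∀ i, ⟪e i, A (e i)⟫ = lam i := by
      intro i
      rw [hae, real_inner_smul_right, real_inner_self_eq_norm_sq, e.norm_eq_one]; ring
    have h4 : ∀ i, ⟪b i, A (b i)⟫ = ⟪A (b i), b i⟫ := fun i => real_inner_comm _ _
    rw [← Finset.sum_congr rfl fun i _ => h4 i, ← Finset.sum_congr rfl fun i _ => h3 i]
    exact h2
  have hsq : ∑ j, ‖A (b j)‖ ^ 2 = ∑ i, lam i ^ 2 := by
    have h1 := LinearMap.trace_eq_sum_inner ((A ∘L A : E →L[ℝ] E) : E →ₗ[ℝ] E) b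
    have h2 := LinearMap.trace_eq_sum_inner ((A ∘L A : E →L[ℝ] E) : E →ₗ[ℝ] E) e
    rw [h1] at h2
    simp only [ContinuousLinearMap.coe_coe, ContinuousLinearMap.comp_apply] at h2
    have h3 : ∀ i, ⟪e i, A (A (e i))⟫ = lam i ^ 2 := by
      intro i
      rw [← hA, hae, real_inner_smul_right, real_inner_smul_left, real_inner_self_eq_norm_sq,
        e.norm_eq_one]
      ring
    have h4 : ∀ i, ⟪b i, A (A (b i))⟫ = ‖A (b i)‖ ^ 2 := fun i => by
      rw [← hA, real_inner_self_eq_norm_sq]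
    rw [← Finset.sum_congr rfl fun i _ => h4 i, ← Finset.sum_congr rfl fun i _ => h3 i]
    exact h2
  have hdet : (ContinuousLinearMap.id ℝ E + t • A).det = ∏ i, (1 + t * lam i) := by
    rw [ContinuousLinearMap.det, ← LinearMap.det_toMatrix e.toBasis]
    rw [← Matrix.det_diagonal]
    congr 1
    ext i j
    rw [LinearMap.toMatrix_apply, Matrix.diagonal_apply]
    have : (ContinuousLinearMap.id ℝ E + t • A) (e j) = (1 + t * lam j) • e j := by
      simp [hae, add_smul, mul_smul]
    simp only [OrthonormalBasis.coe_toBasis, ContinuousLinearMap.coe_coe, this]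
    simp only [map_smul, OrthonormalBasis.coe_toBasis_repr_apply, OrthonormalBasis.repr_self,
      Finsupp.smul_apply, smul_eq_mul]
    by_cases hij : i = j
    · subst hij; simp
    · simp [hij]
  obtain ⟨-, -, h3⟩ := h (fun i => t * lam i) (t * M) (by positivity) htM hlamM
  rw [hdet, htr, hsq]
  have hpos : 0 ≤ ∏ i, (1 + t * lam i) := Finset.prod_nonneg fun i _ => by
    have := (abs_le.1 (hlamM i)).1
    linarith
  rw [abs_of_nonneg hpos]
  have := (abs_le.1 h3).2
  simp only [← Finset.mul_sum, mul_pow] at this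
  nlinarith


open Filter Topology in
lemma approx {E : Type*} [NormedAddCommGroup E] [InnerProductSpace ℝ E] [FiniteDimensional ℝ E]
    {Ω : Set E} (hΩ : IsOpen Ω) (hconv : Convex ℝ Ω)
    (hne : Ω.Nonempty) {φ : E → ℝ} (hφ : ContDiffOn ℝ 1 φ Ω) {M : ℝ}
    (h0 : ∀ x ∈ Ω, |φ x| ≤ M) (h1 : ∀ x ∈ Ω, ‖gradient φ x‖ ≤ M) :
    ∃ Φ : ℕ → E → ℝ, (∀ n, ContDiff ℝ 1 (Φ n)) ∧ ∀ x ∈ Ω,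
      Tendsto (fun n => Φ n x) atTop (𝓝 (φ x)) ∧
      Tendsto (fun n => gradient (Φ n) x) atTop (𝓝 (gradient φ x)) ∧
      ∀ n, |Φ n x| ≤ M ∧ ‖gradient (Φ n) x‖ ≤ M := by
  obtain ⟨x0, hx0⟩ := hne
  set s : ℕ → ℝ := fun n => 1 - 1 / ((n : ℝ) + 2) with hs
  have hn2 : ∀ n : ℕ, 0 < 1 / ((n : ℝ) + 2) ∧ 1 / ((n : ℝ) + 2) < 1 := by
    intro n
    have : (0 : ℝ) ≤ n := Nat.cast_nonneg n
    constructor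
    · positivity
    · rw [div_lt_one (by positivity)]; linarith
  have hs0 : ∀ n, 0 < s n := fun n => by have := (hn2 n).2; simp only [hs]; linarith
  have hs1 : ∀ n, s n < 1 := fun n => by have := (hn2 n).1; simp only [hs]; linarith
  have hslim : Tendsto s atTop (𝓝 1) := by
    have h : Tendsto (fun n : ℕ => 1 / ((n : ℝ) + 2)) atTop (𝓝 0) := by
      have := (tendsto_one_div_add_atTop_nhds_zero_nat (𝕜 := ℝ)).comp (tendsto_add_atTop_nat 1)
      refine this.congr fun n => ?_
      simp only [Function.comp]; push_cast; ring
    simpa [hs] using (tendsto_const_nhds (x := (1 : ℝ))).sub h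
  set h : ℕ → E → E := fun n x => x0 + s n • (x - x0) with hh
  have hcont : ∀ n, Continuous (h n) := fun n => by fun_prop
  have hsmooth : ∀ n, ContDiff ℝ 1 (h n) := fun n => by
    simp only [hh]; fun_prop
  have hcl : ∀ n, ∀ x ∈ closure Ω, h n x ∈ Ω := by
    intro n x hx
    have := hconv.openSegment_interior_closure_subset_interior
      (x := x0) (y := x) (by rwa [hΩ.interior_eq]) hx
    rw [hΩ.interior_eq] at this
    apply this
    refine ⟨1 - s n, s n, by linarith [hs1 n], hs0 n, by ring, ?_⟩
    simp only [hh]; module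
  have hW : ∀ n, IsOpen (h n ⁻¹' Ω) := fun n => hΩ.preimage (hcont n)
  -- cutoffs
  have hχ : ∀ n, ∃ χ : E → ℝ, ContDiff ℝ 1 χ ∧ (∀ᶠ x in 𝓝ˢ (closure Ω), χ x = 1) ∧
      tsupport χ ⊆ h n ⁻¹' Ω := by
    intro n
    obtain ⟨K0, hK, hK1, hK2⟩ := normal_exists_closure_subset isClosed_closure (hW n) (hcl n)
    obtain ⟨χ, h1, h2, h3⟩ := exists_contMDiffMap_one_nhds_of_subset_interior
      (n := 1) (modelWithCornersSelf ℝ E) (s := closure Ω) (t := closure K0)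
      isClosed_closure (hK1.trans (hK.subset_interior_iff.2 subset_closure))
    refine ⟨χ, χ.contMDiff.contDiff, h1, ?_⟩
    refine subset_trans ?_ hK2
    refine closure_minimal ?_ isClosed_closure
    intro x hx
    by_contra hxK
    exact hx (h2 x hxK)
  choose χ hχ1 hχ2 hχ3 using hχ
  have heq : ∀ n, ∀ x ∈ Ω, (fun y => χ n y * φ (h n y)) =ᶠ[𝓝 x] fun y => φ (h n y) := by
    intro n x hx
    have := (hχ2 n).filter_mono (nhds_le_nhdsSet (subset_closure hx))
    filter_upwards [this] with y hy
    rw [hy, one_mul]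
  have hgrad : ∀ n, ∀ x ∈ Ω, gradient (fun y => χ n y * φ (h n y)) x
      = s n • gradient φ (h n x) := by
    intro n x hx
    rw [(heq n x hx).gradient_eq]
    have hmem := hcl n x (subset_closure hx)
    have hd : DifferentiableAt ℝ φ (h n x) :=
      (hφ.contDiffAt (hΩ.mem_nhds hmem)).differentiableAt (by norm_num)
    have h2 : HasFDerivAt (h n) (s n • ContinuousLinearMap.id ℝ E) x := by
      simp only [hh]
      exact (((hasFDerivAt_id x).sub_const x0).const_smul (s n)).const_add x0
    have h3 := hd.hasFDerivAt.comp x h2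
    have h4 : gradient (fun y => φ (h n y)) x = (InnerProductSpace.toDual ℝ E).symm
        (fderiv ℝ (φ ∘ h n) x) := rfl
    rw [h4, h3.fderiv]
    rw [ContinuousLinearMap.comp_smul, ContinuousLinearMap.comp_id, map_smul]
    rfl
  have hlim : ∀ x, Tendsto (fun n => h n x) atTop (𝓝 x) := by
    intro x
    have : Tendsto (fun n => x0 + s n • (x - x0)) atTop (𝓝 (x0 + (1 : ℝ) • (x - x0))) :=
      tendsto_const_nhds.add (hslim.smul_const _)
    simpa using this
  have hgc : ∀ x ∈ Ω, ContinuousAt (gradient φ) x := by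
    intro x hx
    have := (hφ.contDiffAt (hΩ.mem_nhds hx)).continuousAt_fderiv (by norm_num)
    exact (InnerProductSpace.toDual ℝ E).symm.continuous.continuousAt.comp this
  refine ⟨fun n y => χ n y * φ (h n y), fun n => ?_, fun x hx => ⟨?_, ?_, fun n => ⟨?_, ?_⟩⟩⟩
  · rw [contDiff_iff_contDiffAt]
    intro x
    by_cases hx : h n x ∈ Ω
    · exact (hχ1 n).contDiffAt.mul
        ((hφ.contDiffAt (hΩ.mem_nhds hx)).comp x (hsmooth n).contDiffAt)
    · have : x ∉ tsupport (χ n) := fun h => hx (hχ3 n h)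
      rw [notMem_tsupport_iff_eventuallyEq] at this
      refine (contDiffAt_const (c := (0 : ℝ))).congr_of_eventuallyEq ?_
      filter_upwards [this] with y hy
      simp [hy]
  · have : Tendsto (fun n => φ (h n x)) atTop (𝓝 (φ x)) :=
      (hφ.continuousOn.continuousAt (hΩ.mem_nhds hx)).tendsto.comp (hlim x)
    exact this.congr fun n => ((heq n x hx).eq_of_nhds).symm
  · have : Tendsto (fun n => s n • gradient φ (h n x)) atTop (𝓝 ((1 : ℝ) • gradient φ x)) :=
      hslim.smul ((hgc x hx).tendsto.comp (hlim x))
    rw [one_smul] at this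
    exact this.congr fun n => (hgrad n x hx).symm
  · have := (heq n x hx).eq_of_nhds
    change |χ n x * φ (h n x)| ≤ M
    rw [this]
    exact h0 _ (hcl n x (subset_closure hx))
  · rw [hgrad n x hx, norm_smul, Real.norm_eq_abs, abs_of_pos (hs0 n)]
    have := h1 _ (hcl n x (subset_closure hx))
    have h5 := norm_nonneg (gradient φ (h n x))
    nlinarith [hs0 n, hs1 n]


/-- Euclidean space. -/
abbrev Eu (N : ℕ) := EuclideanSpace ℝ (Fin N)

lemma integ {N : ℕ} {F : Type*} [NormedAddCommGroup F] {Ω : Set (Eu N)}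
    (hΩ : IsOpen Ω) (hb : IsBounded Ω) {g : Eu N → F} (hg : ContinuousOn g Ω) {C : ℝ}
    (hC : ∀ x ∈ Ω, ‖g x‖ ≤ C) : IntegrableOn g Ω := by
  have hfin : volume Ω ≠ ⊤ := hb.measure_lt_top.ne
  refine Integrable.mono' (integrableOn_const (C := C) hfin) ?_ ?_
  · exact hg.aestronglyMeasurable hΩ.measurableSet
  · exact (ae_restrict_iff' hΩ.measurableSet).2 (Filter.Eventually.of_forall hC)

open Filter Topology in
lemma weak_ext {N : ℕ} {Ω : Set (Eu N)} (hΩ : IsOpen Ω) (hb : IsBounded Ω) (hconv : Convex ℝ Ω)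
    (hne : Ω.Nonempty) {X : Eu N → Eu N} {h : Eu N → ℝ} {K : ℝ}
    (hX : ContinuousOn X Ω) (hXK : ∀ x ∈ Ω, ‖X x‖ ≤ K)
    (hh : ContinuousOn h Ω) (hhK : ∀ x ∈ Ω, |h x| ≤ K)
    (hw : ∀ φ : Eu N → ℝ, ContDiff ℝ 1 φ →
      ∫ x in Ω, ⟪X x, gradient φ x⟫ = ∫ x in Ω, h x * φ x)
    {φ : Eu N → ℝ} (hφ : ContDiffOn ℝ 1 φ Ω) {M : ℝ}
    (h0 : ∀ x ∈ Ω, |φ x| ≤ M) (h1 : ∀ x ∈ Ω, ‖gradient φ x‖ ≤ M) :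
    ∫ x in Ω, ⟪X x, gradient φ x⟫ = ∫ x in Ω, h x * φ x := by
  obtain ⟨Φ, hΦ, hΦ2⟩ := approx hΩ hconv hne hφ h0 h1
  have hcg : ∀ n, Continuous (gradient (Φ n)) := fun n =>
    (InnerProductSpace.toDual ℝ (Eu N)).symm.continuous.comp ((hΦ n).continuous_fderiv (by norm_num))
  have hfin : volume Ω ≠ ⊤ := hb.measure_lt_top.ne
  have hK0 : 0 ≤ K := by
    obtain ⟨x, hx⟩ := hne
    exact (norm_nonneg _).trans (hXK x hx)
  have L1 : Tendsto (fun n => ∫ x in Ω, ⟪X x, gradient (Φ n) x⟫) atTop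
      (𝓝 (∫ x in Ω, ⟪X x, gradient φ x⟫)) := by
    refine tendsto_integral_of_dominated_convergence (fun _ => K * M) (fun n => ?_)
      (integrableOn_const hfin) (fun n => ?_) ?_
    · exact (hX.inner (hcg n).continuousOn).aestronglyMeasurable hΩ.measurableSet
    · refine (ae_restrict_iff' hΩ.measurableSet).2 (Eventually.of_forall fun x hx => ?_)
      refine (norm_inner_le_norm _ _).trans ?_
      have := ((hΦ2 x hx).2.2 n).2
      have := hXK x hx
      gcongr
    · refine (ae_restrict_iff' hΩ.measurableSet).2 (Eventually.of_forall fun x hx => ?_)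
      exact tendsto_const_nhds.inner (hΦ2 x hx).2.1
  have L2 : Tendsto (fun n => ∫ x in Ω, h x * Φ n x) atTop
      (𝓝 (∫ x in Ω, h x * φ x)) := by
    refine tendsto_integral_of_dominated_convergence (fun _ => K * M) (fun n => ?_)
      (integrableOn_const hfin) (fun n => ?_) ?_
    · exact (hh.mul (hΦ n).continuous.continuousOn).aestronglyMeasurable hΩ.measurableSet
    · refine (ae_restrict_iff' hΩ.measurableSet).2 (Eventually.of_forall fun x hx => ?_)
      rw [Real.norm_eq_abs, abs_mul]
      have := ((hΦ2 x hx).2.2 n).1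
      have := hhK x hx
      gcongr
    · refine (ae_restrict_iff' hΩ.measurableSet).2 (Eventually.of_forall fun x hx => ?_)
      exact tendsto_const_nhds.mul (hΦ2 x hx).1
  exact tendsto_nhds_unique L1 (L2.congr fun n => (hw _ (hΦ n)).symm)

open Filter Topology in
lemma stable_ext {N : ℕ} {Ω : Set (Eu N)} (hΩ : IsOpen Ω) (hb : IsBounded Ω) (hconv : Convex ℝ Ω)
    (hne : Ω.Nonempty) {h : Eu N → ℝ} {K : ℝ}
    (hh : ContinuousOn h Ω) (hhK : ∀ x ∈ Ω, |h x| ≤ K)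
    (hw : ∀ φ : Eu N → ℝ, ContDiff ℝ 1 φ →
      ∫ x in Ω, h x * (φ x) ^ 2 ≤ ∫ x in Ω, ‖gradient φ x‖ ^ 2)
    {φ : Eu N → ℝ} (hφ : ContDiffOn ℝ 1 φ Ω) {M : ℝ}
    (h0 : ∀ x ∈ Ω, |φ x| ≤ M) (h1 : ∀ x ∈ Ω, ‖gradient φ x‖ ≤ M) :
    ∫ x in Ω, h x * (φ x) ^ 2 ≤ ∫ x in Ω, ‖gradient φ x‖ ^ 2 := by
  obtain ⟨Φ, hΦ, hΦ2⟩ := approx hΩ hconv hne hφ h0 h1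
  have hcg : ∀ n, Continuous (gradient (Φ n)) := fun n =>
    (InnerProductSpace.toDual ℝ (Eu N)).symm.continuous.comp ((hΦ n).continuous_fderiv (by norm_num))
  have hfin : volume Ω ≠ ⊤ := hb.measure_lt_top.ne
  have hK0 : 0 ≤ K := by
    obtain ⟨x, hx⟩ := hne
    exact (abs_nonneg _).trans (hhK x hx)
  have L1 : Tendsto (fun n => ∫ x in Ω, ‖gradient (Φ n) x‖ ^ 2) atTop
      (𝓝 (∫ x in Ω, ‖gradient φ x‖ ^ 2)) := by
    refine tendsto_integral_of_dominated_convergence (fun _ => M ^ 2) (fun n => ?_)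
      (integrableOn_const hfin) (fun n => ?_) ?_
    · exact ((hcg n).norm.pow 2).aestronglyMeasurable
    · refine (ae_restrict_iff' hΩ.measurableSet).2 (Eventually.of_forall fun x hx => ?_)
      have := ((hΦ2 x hx).2.2 n).2
      rw [Real.norm_eq_abs, abs_of_nonneg (by positivity)]
      gcongr
    · refine (ae_restrict_iff' hΩ.measurableSet).2 (Eventually.of_forall fun x hx => ?_)
      exact (hΦ2 x hx).2.1.norm.pow 2
  have L2 : Tendsto (fun n => ∫ x in Ω, h x * (Φ n x) ^ 2) atTop
      (𝓝 (∫ x in Ω, h x * (φ x) ^ 2)) := by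
    refine tendsto_integral_of_dominated_convergence (fun _ => K * M ^ 2) (fun n => ?_)
      (integrableOn_const hfin) (fun n => ?_) ?_
    · exact (hh.mul ((hΦ n).continuous.pow 2).continuousOn).aestronglyMeasurable hΩ.measurableSet
    · refine (ae_restrict_iff' hΩ.measurableSet).2 (Eventually.of_forall fun x hx => ?_)
      rw [Real.norm_eq_abs, abs_mul, abs_pow]
      have := ((hΦ2 x hx).2.2 n).1
      have := hhK x hx
      gcongr
    · refine (ae_restrict_iff' hΩ.measurableSet).2 (Eventually.of_forall fun x hx => ?_)
      exact tendsto_const_nhds.mul ((hΦ2 x hx).1.pow 2)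
  exact le_of_tendsto_of_tendsto' L2 L1 fun n => hw _ (hΦ n)

lemma hasDerivAt_pos_sq (s : ℝ) : HasDerivAt (fun s : ℝ => (max s 0) ^ 2) (2 * max s 0) s := by
  rcases lt_trichotomy s 0 with hs | hs | hs
  · rw [max_eq_right hs.le, mul_zero]
    refine (hasDerivAt_const s (0 : ℝ)).congr_of_eventuallyEq ?_
    filter_upwards [Iio_mem_nhds hs] with y hy
    rw [max_eq_right (le_of_lt hy)]; simp
  · subst hs
    rw [max_self, mul_zero, hasDerivAt_iff_isLittleO_nhds_zero]
    simp only [zero_add, max_self, smul_zero, sub_zero]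
    have h1 : (fun h : ℝ => (max h 0) ^ 2 - 0 ^ 2) =O[nhds 0] fun h : ℝ => h ^ 2 := by
      refine Asymptotics.IsBigO.of_bound 1 (Filter.Eventually.of_forall fun h => ?_)
      rw [Real.norm_eq_abs, Real.norm_eq_abs, abs_of_nonneg (sq_nonneg h), one_mul]
      rcases le_total h 0 with h0 | h0
      · rw [max_eq_right h0]; simp [sq_nonneg]
      · rw [max_eq_left h0]; simp
    exact h1.trans_isLittleO (Asymptotics.isLittleO_pow_id (by norm_num))
  · rw [max_eq_left hs.le]
    have := hasDerivAt_pow 2 s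
    simp only [Nat.cast_ofNat, Nat.add_one_sub_one, pow_one] at this
    refine this.congr_of_eventuallyEq ?_
    filter_upwards [Ioi_mem_nhds hs] with y hy
    rw [max_eq_left (le_of_lt hy)]

lemma contDiff_pos_sq : ContDiff ℝ 1 (fun s : ℝ => (max s 0) ^ 2) := by
  rw [contDiff_one_iff_deriv]
  refine ⟨fun s => (hasDerivAt_pos_sq s).differentiableAt, ?_⟩
  have : deriv (fun s : ℝ => (max s 0) ^ 2) = fun s => 2 * max s 0 :=
    funext fun s => (hasDerivAt_pos_sq s).deriv
  rw [this]
  fun_prop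

open Filter Topology in
/-- A weak Neumann field never points into the convex domain at the boundary. -/
lemma boundary {N : ℕ} {Ω : Set (Eu N)} (hΩ : IsOpen Ω) (hb : IsBounded Ω) (hconv : Convex ℝ Ω)
    {X : Eu N → Eu N} {h : Eu N → ℝ} {K : ℝ} (hK : 0 ≤ K)
    (hX : ContinuousOn X (closure Ω)) (hXK : ∀ x ∈ Ω, ‖X x‖ ≤ K)
    (hh : ContinuousOn h Ω) (hhK : ∀ x ∈ Ω, |h x| ≤ K)
    (hw : ∀ φ : Eu N → ℝ, ContDiff ℝ 1 φ →
      ∫ x in Ω, ⟪X x, gradient φ x⟫ = ∫ x in Ω, h x * φ x)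
    {y : Eu N} (hy : y ∈ frontier Ω) {t : ℝ} (ht : 0 < t) : y + t • X y ∉ Ω := by
  intro hmem
  have hyc : y ∈ closure Ω := frontier_subset_closure hy
  have hyΩ : y ∉ Ω := by
    rw [hΩ.frontier_eq] at hy
    exact hy.2
  obtain ⟨l, hl⟩ := geometric_hahn_banach_open_point hconv hΩ hyΩ
  have hlX : l (X y) < 0 := by
    have := hl _ hmem
    rw [map_add, map_smul, smul_eq_mul] at this
    nlinarith
  set c := -l (X y) with hc
  have hc0 : 0 < c := by linarith
  set G : Eu N → ℝ := fun x => l (X x) - 2 * ⟪x - y, X x⟫ with hG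
  have hGc : ContinuousOn G (closure Ω) := by
    refine (l.continuous.comp_continuousOn hX).sub (continuousOn_const.mul ?_)
    exact ContinuousOn.inner (by fun_prop) hX
  have hGy : G y = -c := by simp [hG, hc]
  have hev : ∀ᶠ x in 𝓝[closure Ω] y, G x < -c / 2 :=
    (hGc y hyc).eventually (Iio_mem_nhds (by rw [hGy]; linarith))
  obtain ⟨r, hr, hball⟩ := Metric.mem_nhdsWithin_iff.1 hev
  obtain ⟨δ, hδ0, hδr, hδK⟩ : ∃ δ : ℝ, 0 < δ ∧ δ < r ^ 2 ∧ K * δ < c := by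
    refine ⟨min (r ^ 2 / 2) (c / (2 * (K + 1))), by positivity, ?_, ?_⟩
    · refine (min_le_left _ _).trans_lt ?_
      have : 0 < r ^ 2 := by positivity
      linarith
    · have h1 : min (r ^ 2 / 2) (c / (2 * (K + 1))) ≤ c / (2 * (K + 1)) := min_le_right _ _
      have h2 : K * (c / (2 * (K + 1))) < c := by
        rw [mul_div_assoc', div_lt_iff₀ (by positivity)]
        nlinarith
      exact (mul_le_mul_of_nonneg_left h1 hK).trans_lt h2
  set Φ : Eu N → ℝ := fun x => l (x - y) - ‖x - y‖ ^ 2 + δ with hΦ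
  have hΦs : ContDiff ℝ 1 Φ := by
    simp only [hΦ]
    exact ((l.contDiff.comp (by fun_prop)).sub ((contDiff_id.sub contDiff_const).norm_sq ℝ)).add
      contDiff_const
  have hΦd : ∀ x, HasFDerivAt Φ (l - (2 : ℝ) • innerSL ℝ (x - y)) x := by
    intro x
    have e1 : HasFDerivAt (fun x : Eu N => x - y) (ContinuousLinearMap.id ℝ (Eu N)) x :=
      (hasFDerivAt_id x).sub_const y
    have e2 : HasFDerivAt (fun x : Eu N => l (x - y)) l x := by
      have := l.hasFDerivAt.comp x e1
      rwa [ContinuousLinearMap.comp_id] at this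
    have e3 := e1.norm_sq
    have e4 := (e2.sub e3).add_const δ
    rw [ContinuousLinearMap.comp_id, ← Nat.cast_smul_eq_nsmul ℝ, Nat.cast_ofNat] at e4
    exact e4
  set a : Eu N → ℝ := fun x => max (Φ x) 0 with ha
  have hac : Continuous a := hΦs.continuous.max continuous_const
  have hφs : ContDiff ℝ 1 (fun x => a x ^ 2) := contDiff_pos_sq.comp hΦs
  have hφd : ∀ x, HasFDerivAt (fun x => a x ^ 2)
      ((2 * a x) • (l - (2 : ℝ) • innerSL ℝ (x - y))) x := fun x =>
    (hasDerivAt_pos_sq (Φ x)).comp_hasFDerivAt x (hΦd x)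
  have hin : ∀ x, ⟪X x, gradient (fun x => a x ^ 2) x⟫ = 2 * a x * G x := by
    intro x
    rw [real_inner_comm, inner_gradient_left, (hφd x).fderiv]
    simp [hG, inner_sub_left]
  have ha0 : ∀ x, 0 ≤ a x := fun x => le_max_right _ _
  have hlneg : ∀ x ∈ Ω, l (x - y) < 0 := fun x hx => by
    rw [map_sub]; linarith [hl x hx]
  have haδ : ∀ x ∈ Ω, a x ≤ δ := fun x hx => by
    refine max_le ?_ hδ0.le
    have := hlneg x hx
    simp only [hΦ]; nlinarith [sq_nonneg ‖x - y‖]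
  have hpt1 : ∀ x ∈ Ω, 2 * a x * G x ≤ -c * a x := by
    intro x hx
    rcases le_or_gt (Φ x) 0 with h0 | h0
    · have : a x = 0 := max_eq_right h0
      simp [this]
    · have h2 : ‖x - y‖ ^ 2 < r ^ 2 := by
        have := hlneg x hx
        simp only [hΦ] at h0; linarith
      have h3 : ‖x - y‖ < r := lt_of_pow_lt_pow_left₀ 2 hr.le h2
      have h4 : G x < -c / 2 := hball ⟨by rwa [Metric.mem_ball, dist_eq_norm], subset_closure hx⟩
      nlinarith [ha0 x]
  have hpt2 : ∀ x ∈ Ω, -(K * δ) * a x ≤ h x * a x ^ 2 := by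
    intro x hx
    have h1 := (abs_le.1 (hhK x hx)).1
    have h2 := haδ x hx
    have h3 := ha0 x
    have h4 : a x ^ 2 ≤ δ * a x := by nlinarith
    nlinarith [mul_le_mul_of_nonneg_left h4 hK, sq_nonneg (a x)]
  have hia : IntegrableOn a Ω := integ hΩ hb hac.continuousOn (C := δ) fun x hx => by
    rw [Real.norm_eq_abs, abs_of_nonneg (ha0 x)]; exact haδ x hx
  have hGcΩ := hGc.mono (subset_closure (s := Ω))
  obtain ⟨KG, hKG⟩ := (hb.isCompact_closure).exists_bound_of_continuousOn hGc
  have hi1 : IntegrableOn (fun x => 2 * a x * G x) Ω :=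
    integ hΩ hb ((continuousOn_const.mul hac.continuousOn).mul hGcΩ) (C := 2 * δ * KG)
      fun x hx => by
        rw [norm_mul, norm_mul, Real.norm_eq_abs 2, abs_two, Real.norm_eq_abs (a x), abs_of_nonneg (ha0 x)]
        have := haδ x hx
        have := hKG x (subset_closure hx)
        have := ha0 x
        gcongr
  have hi2 : IntegrableOn (fun x => h x * a x ^ 2) Ω :=
    integ hΩ hb (hh.mul (hac.pow 2).continuousOn) (C := K * δ ^ 2)
      fun x hx => by
        rw [norm_mul, norm_pow, Real.norm_eq_abs (a x), abs_of_nonneg (ha0 x)]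
        have := haδ x hx
        have := hhK x hx
        have := ha0 x
        gcongr
        assumption
  have hpos : 0 < ∫ x in Ω, a x := by
    rw [setIntegral_pos_iff_support_of_nonneg_ae (Eventually.of_forall ha0) hia]
    have hop : IsOpen (Φ ⁻¹' Set.Ioi 0) := isOpen_Ioi.preimage hΦs.continuous
    have hyin : y ∈ Φ ⁻¹' Set.Ioi 0 := by simp [hΦ, hδ0]
    obtain ⟨x, hx1, hx2⟩ := mem_closure_iff.1 hyc _ hop hyin
    refine lt_of_lt_of_le ((hop.inter hΩ).measure_pos volume ⟨x, hx1, hx2⟩) (measure_mono ?_)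
    rintro z ⟨hz1, hz2⟩
    refine ⟨?_, hz2⟩
    have : (0 : ℝ) < Φ z := hz1
    exact (lt_of_lt_of_le this (le_max_left _ _)).ne'
  have h1 := hw _ hφs
  simp_rw [hin] at h1
  have h2 : ∫ x in Ω, 2 * a x * G x ≤ ∫ x in Ω, -c * a x :=
    setIntegral_mono_on hi1 (hia.const_mul _) hΩ.measurableSet hpt1
  have h3 : ∫ x in Ω, -(K * δ) * a x ≤ ∫ x in Ω, h x * a x ^ 2 :=
    setIntegral_mono_on (hia.const_mul _) hi2 hΩ.measurableSet hpt2
  rw [integral_const_mul] at h2 h3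
  nlinarith



open Filter Topology in
lemma pde {N : ℕ} {Ω : Set (Eu N)} (hΩ : IsOpen Ω) {X : Eu N → Eu N} {h : Eu N → ℝ}
    (b : OrthonormalBasis (Fin N) ℝ (Eu N))
    (hX : ContDiffOn ℝ 1 X Ω) (hh : ContinuousOn h Ω)
    (hw : ∀ φ : Eu N → ℝ, ContDiff ℝ 1 φ →
      ∫ x in Ω, ⟪X x, gradient φ x⟫ = ∫ x in Ω, h x * φ x) :
    ∀ x ∈ Ω, ∑ j, ⟪fderiv ℝ X x (b j), b j⟫ = - h x := by
  have hDX : ContinuousOn (fderiv ℝ X) Ω := hX.continuousOn_fderiv_of_isOpen hΩ le_rfl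
  have hcj : ∀ j, ContinuousOn (fun x => ⟪fderiv ℝ X x (b j), b j⟫) Ω := fun j =>
    (hDX.clm_apply continuousOn_const).inner continuousOn_const
  have hcd : ContinuousOn (fun x => ∑ j, ⟪fderiv ℝ X x (b j), b j⟫) Ω :=
    continuousOn_finsetSum _ fun j _ => hcj j
  have key : ∀ᵐ x, x ∈ Ω → ∑ j, ⟪fderiv ℝ X x (b j), b j⟫ + h x = 0 := by
    refine hΩ.ae_eq_zero_of_integral_contDiff_smul_eq_zero
      ((hcd.add hh).locallyIntegrableOn hΩ.measurableSet) ?_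
    intro g hg hgs hgΩ
    have hg1 : ContDiff ℝ 1 g := hg.of_le (by exact_mod_cast le_top)
    have hgd : Continuous (fderiv ℝ g) := hg1.continuous_fderiv (by norm_num)
    have hint : ∀ F : Eu N → ℝ, ContinuousOn F Ω → Function.support F ⊆ tsupport g →
        Integrable F := by
      intro F hF hs
      rw [← integrableOn_iff_integrable_of_support_subset hs]
      exact (hF.mono hgΩ).integrableOn_compact hgs
    have hsg : ∀ F : Eu N → ℝ, Function.support (fun x => F x * g x) ⊆ tsupport g := by
      intro F x hx
      exact subset_tsupport g (right_ne_zero_of_mul hx)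
    have hsg' : ∀ (F : Eu N → ℝ) (v : Eu N),
        Function.support (fun x => F x * fderiv ℝ g x v) ⊆ tsupport g := by
      intro F v x hx
      refine support_fderiv_subset ℝ (f := g) ?_
      intro h0
      exact right_ne_zero_of_mul hx (by rw [h0]; rfl)
    have hXj : ∀ j, ContinuousOn (fun x => ⟪X x, b j⟫) Ω := fun j =>
      hX.continuousOn.inner continuousOn_const
    have I1 : ∀ j, Integrable (fun x => ⟪X x, b j⟫ * fderiv ℝ g x (b j)) := fun j =>
      hint _ ((hXj j).mul (hgd.clm_apply continuous_const).continuousOn) (hsg' _ _)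
    have I2 : ∀ j, Integrable (fun x => ⟪fderiv ℝ X x (b j), b j⟫ * g x) := fun j =>
      hint _ ((hcj j).mul hg1.continuous.continuousOn) (hsg _)
    have I3 : Integrable (fun x => h x * g x) :=
      hint _ (hh.mul hg1.continuous.continuousOn) (hsg _)
    have ibp : ∀ j, ∫ x, ⟪X x, b j⟫ * fderiv ℝ g x (b j) =
        - ∫ x, ⟪fderiv ℝ X x (b j), b j⟫ * g x := by
      intro j
      refine integral_bilinear_hasLineDerivAt_right_eq_neg_left_of_integrable
        (B := ContinuousLinearMap.mul ℝ ℝ) (v := b j) (f := fun x => ⟪X x, b j⟫)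
        (f' := fun x => ⟪fderiv ℝ X x (b j), b j⟫) (g := g) (g' := fun x => fderiv ℝ g x (b j))
        (I2 j) (I1 j) (hint _ ((hXj j).mul hg1.continuous.continuousOn) (hsg _)) ?_ ?_
      · intro x hx
        have hd : HasFDerivAt X (fderiv ℝ X x) x :=
          ((hX.contDiffAt (hΩ.mem_nhds (hgΩ hx))).differentiableAt (by norm_num)).hasFDerivAt
        have := (hd.inner ℝ (hasFDerivAt_const (b j) x)).hasLineDerivAt (b j)
        simpa [fderivInnerCLM_apply] using this
      · intro x _
        exact ((hg1.differentiable (by norm_num)) x).hasFDerivAt.hasLineDerivAt (b j)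
    have hpt : ∀ x, ⟪X x, gradient g x⟫ = ∑ j, ⟪X x, b j⟫ * fderiv ℝ g x (b j) := by
      intro x
      rw [← b.sum_inner_mul_inner (X x) (gradient g x)]
      refine Finset.sum_congr rfl fun j _ => ?_
      rw [real_inner_comm (gradient g x) (b j), inner_gradient_left]
    have e1 : ∫ x in Ω, ⟪X x, gradient g x⟫ = ∫ x, ⟪X x, gradient g x⟫ := by
      refine setIntegral_eq_integral_of_forall_compl_eq_zero fun x hx => ?_
      rw [hpt]
      refine Finset.sum_eq_zero fun j _ => ?_
      by_contra h0
      exact hx (hgΩ (hsg' (fun x => ⟪X x, b j⟫) (b j) h0))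
    have e2 : ∫ x in Ω, h x * g x = ∫ x, h x * g x := by
      refine setIntegral_eq_integral_of_forall_compl_eq_zero fun x hx => ?_
      by_contra h0
      exact hx (hgΩ (hsg h h0))
    have e3 := hw g hg1
    rw [e1, e2] at e3
    have e4 : ∫ x, ⟪X x, gradient g x⟫ = - ∫ x, ∑ j, ⟪fderiv ℝ X x (b j), b j⟫ * g x := by
      simp_rw [hpt]
      rw [integral_finsetSum _ fun j _ => I1 j, integral_finsetSum _ fun j _ => I2 j,
        ← Finset.sum_neg_distrib]
      exact Finset.sum_congr rfl fun j _ => ibp j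
    have e5 : ∀ x, g x • (∑ j, ⟪fderiv ℝ X x (b j), b j⟫ + h x) =
        ∑ j, ⟪fderiv ℝ X x (b j), b j⟫ * g x + h x * g x := by
      intro x
      rw [smul_eq_mul, mul_add, Finset.mul_sum]
      congr 1
      · exact Finset.sum_congr rfl fun j _ => mul_comm _ _
      · ring
    simp_rw [e5]
    rw [integral_add (integrable_finsetSum _ fun j _ => I2 j) I3]
    linarith
  have := Measure.eqOn_open_of_ae_eq (μ := volume) (U := Ω)
    (f := fun x => ∑ j, ⟪fderiv ℝ X x (b j), b j⟫) (g := fun x => - h x)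
    ((ae_restrict_iff' hΩ.measurableSet).2 (key.mono fun x hx hxΩ => by
      have := hx hxΩ
      linarith)) hΩ hcd hh.neg
  exact this

lemma data {N : ℕ} {Ω V : Set (Eu N)} (hΩ : IsOpen Ω) (hb : IsBounded Ω) (hconv : Convex ℝ Ω)
    (hne : Ω.Nonempty) {u : Eu N → ℝ} (hV : IsOpen V) (hΩV : closure Ω ⊆ V)
    (hu : ContDiffOn ℝ 1 u V) (hu2 : ContDiffOn ℝ 2 u (closure Ω)) :
    ContinuousOn (gradient u) (closure Ω) ∧ ContDiffOn ℝ 1 (gradient u) Ω ∧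
    (∃ M, ∀ x ∈ Ω, ‖fderiv ℝ (gradient u) x‖ ≤ M) ∧
    ∀ x ∈ Ω, ∀ v w, ⟪fderiv ℝ (gradient u) x v, w⟫ = ⟪v, fderiv ℝ (gradient u) x w⟫ := by
  have hΩc : Ω ⊆ closure Ω := subset_closure
  have hcomp : IsCompact (closure Ω) := hb.isCompact_closure
  have hud : UniqueDiffOn ℝ (closure Ω) := by
    refine uniqueDiffOn_convex hconv.closure ?_
    exact hne.mono (interior_maximal hΩc hΩ)
  have hnh : ∀ x ∈ Ω, closure Ω ∈ nhds x := fun x hx =>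
    Filter.mem_of_superset (hΩ.mem_nhds hx) hΩc
  set L := (InnerProductSpace.toDual ℝ (Eu N)).symm with hL
  have hgr : gradient u = fun x => L (fderiv ℝ u x) := rfl
  have hLc : ContDiff ℝ 1 (fun z => L z) := L.toContinuousLinearEquiv.contDiff
  have hfc : ContinuousOn (fderiv ℝ u) V := hu.continuousOn_fderiv_of_isOpen hV le_rfl
  have hw1 : ContDiffOn ℝ 1 (fderivWithin ℝ u (closure Ω)) (closure Ω) :=
    hu2.fderivWithin hud (by norm_num)
  have heq : ∀ x ∈ closure Ω, fderivWithin ℝ u (closure Ω) x = fderiv ℝ u x := fun x hx =>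
    ((hu.contDiffAt (hV.mem_nhds (hΩV hx))).differentiableAt (by norm_num)).fderivWithin (hud x hx)
  have hgC : ContDiffOn ℝ 1 (gradient u) (closure Ω) := by
    rw [hgr]
    exact hLc.comp_contDiffOn (hw1.congr fun x hx => (heq x hx).symm)
  have hg1 := hgC.mono hΩc
  refine ⟨hgC.continuousOn, hg1, ?_, ?_⟩
  · obtain ⟨M, hM⟩ := hcomp.exists_bound_of_continuousOn
      (hgC.continuousOn_fderivWithin hud le_rfl)
    refine ⟨M, fun x hx => ?_⟩
    have := hM x (hΩc hx)
    rwa [fderivWithin_of_mem_nhds (hnh x hx)] at this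
  · intro x hx v w
    have hc2 : ContDiffAt ℝ 2 u x := hu2.contDiffAt (hnh x hx)
    have hs := hc2.isSymmSndFDerivAt (by simp)
    have hd : DifferentiableAt ℝ (fderiv ℝ u) x :=
      (hc2.fderiv_right (m := 1) (by norm_num)).differentiableAt (by norm_num)
    have hfd : ∀ v, fderiv ℝ (gradient u) x v = L (fderiv ℝ (fderiv ℝ u) x v) := by
      intro v
      have := (L.toContinuousLinearEquiv.hasFDerivAt (x := fderiv ℝ u x)).comp x hd.hasFDerivAt
      rw [hgr]
      exact congrArg (fun A => A v) this.fderiv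
    have h1 : ∀ v w, ⟪fderiv ℝ (gradient u) x v, w⟫ = fderiv ℝ (fderiv ℝ u) x v w := by
      intro v w
      rw [hfd]
      exact InnerProductSpace.toDual_symm_apply
    rw [h1, real_inner_comm, h1]
    exact hs v w


lemma abs_div_le {N : ℕ} (b : OrthonormalBasis (Fin N) ℝ (Eu N)) {A : Eu N →L[ℝ] Eu N} {M : ℝ}
    (hM : ‖A‖ ≤ M) : |∑ j, ⟪A (b j), b j⟫| ≤ N * M := by
  refine (Finset.abs_sum_le_sum_abs _ _).trans ?_
  refine (Finset.sum_le_card_nsmul _ _ M fun j _ => ?_).trans (by simp)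
  refine (abs_real_inner_le_norm _ _).trans ?_
  rw [b.norm_eq_one, mul_one]
  refine (A.le_opNorm _).trans ?_
  rwa [b.norm_eq_one, mul_one]

lemma sum_sq_le {N : ℕ} (b : OrthonormalBasis (Fin N) ℝ (Eu N)) {A : Eu N →L[ℝ] Eu N} {M : ℝ}
    (hM : ‖A‖ ≤ M) : ∑ j, ‖A (b j)‖ ^ 2 ≤ N * M ^ 2 := by
  refine (Finset.sum_le_card_nsmul _ _ (M ^ 2) fun j _ => ?_).trans (by simp)
  have : ‖A (b j)‖ ≤ M := by
    refine (A.le_opNorm _).trans ?_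
    rwa [b.norm_eq_one, mul_one]
  gcongr

open Filter Topology in
lemma cover {N : ℕ} {Ω : Set (Eu N)} (hΩ : IsOpen Ω) (hb : IsBounded Ω) (hconv : Convex ℝ Ω)
    {X : Eu N → Eu N} {M t : ℝ}
    (hX : ContDiffOn ℝ 1 X Ω) (hXc : ContinuousOn X (closure Ω))
    (hM : ∀ x ∈ Ω, ‖fderiv ℝ X x‖ ≤ M)
    (ht : 0 < t) (htM : t * M < 1) {x0 : Eu N} (hx0 : x0 ∈ Ω) (hx0t : x0 + t • X x0 ∈ Ω)
    (hbd : ∀ y ∈ frontier Ω, y + t • X y ∉ Ω) :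
    Ω ⊆ (fun x => x + t • X x) '' Ω := by
  set T : Eu N → Eu N := fun x => x + t • X x with hT
  have hTc : ContinuousOn T (closure Ω) := continuousOn_id.add (hXc.const_smul t)
  refine hconv.isPreconnected.subset_of_closure_inter_subset ?_ ⟨T x0, hx0t, x0, hx0, rfl⟩ ?_
  · rw [isOpen_iff_mem_nhds]
    rintro _ ⟨x, hx, rfl⟩
    have hs : HasStrictFDerivAt X (fderiv ℝ X x) x :=
      (hX.contDiffAt (hΩ.mem_nhds hx)).hasStrictFDerivAt (by norm_num)
    have hs2 : HasStrictFDerivAt T (ContinuousLinearMap.id ℝ (Eu N) + t • fderiv ℝ X x) x :=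
      (hasStrictFDerivAt_id x).add (hs.const_smul t)
    have hinj : Function.Injective
        ((ContinuousLinearMap.id ℝ (Eu N) + t • fderiv ℝ X x : Eu N →L[ℝ] Eu N) :
          Eu N →ₗ[ℝ] Eu N) := by
      rw [injective_iff_map_eq_zero]
      intro v hv
      have hv1 : v + t • fderiv ℝ X x v = 0 := hv
      have h1 : ‖v‖ = t * ‖fderiv ℝ X x v‖ := by
        rw [eq_neg_of_add_eq_zero_left hv1, norm_neg, norm_smul, Real.norm_eq_abs,
          abs_of_pos ht]
        congr 2
        rw [← eq_neg_of_add_eq_zero_left hv1]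
      have h2 : ‖fderiv ℝ X x v‖ ≤ M * ‖v‖ :=
        (ContinuousLinearMap.le_opNorm _ _).trans (by gcongr; exact hM x hx)
      by_contra hne
      have h3 : 0 < ‖v‖ := norm_pos_iff.2 hne
      nlinarith [mul_le_mul_of_nonneg_left h2 ht.le]
    have hsurj := LinearMap.injective_iff_surjective.1 hinj
    have := hs2.map_nhds_eq_of_surj (LinearMap.range_eq_top.2 hsurj)
    rw [← this]
    exact image_mem_map (hΩ.mem_nhds hx)
  · rintro z ⟨hz, hzΩ⟩
    have hcl : closure (T '' Ω) ⊆ T '' closure Ω :=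
      closure_minimal (Set.image_mono subset_closure)
        (hb.isCompact_closure.image_of_continuousOn hTc).isClosed
    obtain ⟨y, hy, rfl⟩ := hcl hz
    by_cases hyΩ : y ∈ Ω
    · exact ⟨y, hyΩ, rfl⟩
    · exfalso
      refine hbd y ?_ hzΩ
      rw [hΩ.frontier_eq]
      exact ⟨hy, hyΩ⟩

open Filter Topology in
lemma kadlec {N : ℕ} {Ω : Set (Eu N)} (hΩ : IsOpen Ω) (hb : IsBounded Ω) (hconv : Convex ℝ Ω)
    (hne : Ω.Nonempty) {X : Eu N → Eu N} {M : ℝ} (b : OrthonormalBasis (Fin N) ℝ (Eu N))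
    (hX : ContDiffOn ℝ 1 X Ω) (hXc : ContinuousOn X (closure Ω))
    (hM : ∀ x ∈ Ω, ‖fderiv ℝ X x‖ ≤ M)
    (hsym : ∀ x ∈ Ω, ∀ v w, ⟪fderiv ℝ X x v, w⟫ = ⟪v, fderiv ℝ X x w⟫)
    (hbd : ∀ y ∈ frontier Ω, ∀ t : ℝ, 0 < t → y + t • X y ∉ Ω)
    (hdiv : ∫ x in Ω, ∑ j, ⟪fderiv ℝ X x (b j), b j⟫ = 0) :
    ∫ x in Ω, ∑ j, ‖fderiv ℝ X x (b j)‖ ^ 2 ≤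
      ∫ x in Ω, (∑ j, ⟪fderiv ℝ X x (b j), b j⟫) ^ 2 := by
  obtain ⟨x0, hx0⟩ := hne
  have hM0 : 0 ≤ M := (norm_nonneg _).trans (hM x0 hx0)
  have hfin : volume Ω ≠ ⊤ := hb.measure_lt_top.ne
  have hDX : ContinuousOn (fderiv ℝ X) Ω := hX.continuousOn_fderiv_of_isOpen hΩ le_rfl
  obtain ⟨C, hC, hdet⟩ := det_expand b M hM0
  set dv : Eu N → ℝ := fun x => ∑ j, ⟪fderiv ℝ X x (b j), b j⟫ with hdv
  set D2 : Eu N → ℝ := fun x => ∑ j, ‖fderiv ℝ X x (b j)‖ ^ 2 with hD2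
  have hdvc : ContinuousOn dv Ω := continuousOn_finsetSum _ fun j _ =>
    (hDX.clm_apply continuousOn_const).inner continuousOn_const
  have hD2c : ContinuousOn D2 Ω := continuousOn_finsetSum _ fun j _ =>
    (hDX.clm_apply continuousOn_const).norm.pow 2
  have i1 : IntegrableOn dv Ω := integ hΩ hb hdvc (C := N * M) fun x hx =>
    abs_div_le b (hM x hx)
  have i2 : IntegrableOn (fun x => dv x ^ 2) Ω :=
    integ hΩ hb (hdvc.pow 2) (C := (N * M) ^ 2) fun x hx => by
      rw [norm_pow]
      have : ‖dv x‖ ≤ N * M := abs_div_le b (hM x hx)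
      gcongr
  have hD20 : ∀ x, 0 ≤ D2 x := fun x => Finset.sum_nonneg fun j _ => sq_nonneg _
  have i3 : IntegrableOn D2 Ω := integ hΩ hb hD2c (C := N * M ^ 2) fun x hx => by
    rw [Real.norm_eq_abs, abs_of_nonneg (hD20 x)]
    exact sum_sq_le b (hM x hx)
  set S := (∫ x in Ω, D2 x) - ∫ x in Ω, dv x ^ 2 with hS
  suffices h : S ≤ 0 by linarith
  have ev1 : ∀ᶠ t in 𝓝[>] (0 : ℝ), 0 < t := self_mem_nhdsWithin
  have ev2 : ∀ᶠ t in 𝓝[>] (0 : ℝ), t * M < 1 := by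
    refine (ContinuousAt.eventually_lt (f := fun t : ℝ => t * M) (g := fun _ => 1)
      (by fun_prop) (by fun_prop) (by simp)).filter_mono nhdsWithin_le_nhds
  have ev3 : ∀ᶠ t in 𝓝[>] (0 : ℝ), x0 + t • X x0 ∈ Ω := by
    have hc : ContinuousAt (fun t : ℝ => x0 + t • X x0) 0 := by fun_prop
    refine (hc.eventually_mem (hΩ.mem_nhds (by simpa using hx0))).filter_mono nhdsWithin_le_nhds
  have lim : Tendsto (fun t : ℝ => 2 * C * volume.real Ω * t) (𝓝[>] 0) (𝓝 0) := by
    have : Tendsto (fun t : ℝ => 2 * C * volume.real Ω * t) (𝓝 0)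
        (𝓝 (2 * C * volume.real Ω * 0)) := (by fun_prop : Continuous _).tendsto _
    rw [mul_zero] at this
    exact this.mono_left nhdsWithin_le_nhds
  refine ge_of_tendsto lim ?_
  filter_upwards [ev1, ev2, ev3] with t ht htM hx0t
  have hcov := cover hΩ hb hconv hX hXc hM ht htM hx0 hx0t (fun y hy => hbd y hy t ht)
  set P : Eu N → ℝ := fun x => 1 + t * dv x + t ^ 2 / 2 * (dv x ^ 2 - D2 x) + C * t ^ 3 with hP
  have hPd : ∀ x ∈ Ω, |(ContinuousLinearMap.id ℝ (Eu N) + t • fderiv ℝ X x).det| ≤ P x :=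
    fun x hx => hdet _ t (hsym x hx) (hM x hx) ht.le htM.le
  have iP : IntegrableOn P Ω := by
    have j1 : IntegrableOn (fun _ : Eu N => (1 : ℝ)) Ω := integrableOn_const hfin
    have j2 : IntegrableOn (fun _ : Eu N => C * t ^ 3) Ω := integrableOn_const hfin
    exact ((j1.add (i1.const_mul t)).add ((i2.sub i3).const_mul (t ^ 2 / 2))).add j2
  have hPint : ∫ x in Ω, P x = volume.real Ω - t ^ 2 / 2 * S + C * t ^ 3 * volume.real Ω := by
    have j1 : IntegrableOn (fun _ : Eu N => (1 : ℝ)) Ω := integrableOn_const hfin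
    have j2 : IntegrableOn (fun _ : Eu N => C * t ^ 3) Ω := integrableOn_const hfin
    have j3 : IntegrableOn (fun x => t * dv x) Ω := i1.const_mul t
    have j4 : IntegrableOn (fun x => t ^ 2 / 2 * (dv x ^ 2 - D2 x)) Ω :=
      (i2.sub i3).const_mul (t ^ 2 / 2)
    have j5 : IntegrableOn (fun x => 1 + t * dv x) Ω := j1.add j3
    have j6 : IntegrableOn (fun x => 1 + t * dv x + t ^ 2 / 2 * (dv x ^ 2 - D2 x)) Ω := j5.add j4
    simp only [hP]
    rw [integral_add j6 j2, integral_add j5 j4, integral_add j1 j3, integral_const_mul, integral_const_mul,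
      integral_sub i2 i3, hdiv, setIntegral_const, setIntegral_const, hS]
    simp only [smul_eq_mul]
    ring
  have hvol : volume Ω ≤ ENNReal.ofReal (∫ x in Ω, P x) := by
    calc volume Ω ≤ volume ((fun x => x + t • X x) '' Ω) := measure_mono hcov
      _ ≤ ∫⁻ x in Ω, ENNReal.ofReal
          |(ContinuousLinearMap.id ℝ (Eu N) + t • fderiv ℝ X x).det| := by
          refine addHaar_image_le_lintegral_abs_det_fderiv volume hΩ.measurableSet fun x hx => ?_
          have hd : HasFDerivAt X (fderiv ℝ X x) x :=
            ((hX.contDiffAt (hΩ.mem_nhds hx)).differentiableAt (by norm_num)).hasFDerivAt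
          exact ((hasFDerivAt_id x).add (hd.const_smul t)).hasFDerivWithinAt
      _ ≤ ∫⁻ x in Ω, ENNReal.ofReal (P x) := by
          refine setLIntegral_mono' hΩ.measurableSet fun x hx => ?_
          exact ENNReal.ofReal_le_ofReal (hPd x hx)
      _ = ENNReal.ofReal (∫ x in Ω, P x) := by
          rw [ofReal_integral_eq_lintegral_ofReal iP]
          exact (ae_restrict_iff' hΩ.measurableSet).2
            (Eventually.of_forall fun x hx => (abs_nonneg _).trans (hPd x hx))
  have hP0 : 0 ≤ ∫ x in Ω, P x :=
    setIntegral_nonneg hΩ.measurableSet fun x hx => (abs_nonneg _).trans (hPd x hx)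
  have hvr : volume.real Ω ≤ ∫ x in Ω, P x := by
    have := ENNReal.toReal_mono ENNReal.ofReal_ne_top hvol
    rwa [ENNReal.toReal_ofReal hP0] at this
  rw [hPint] at hvr
  have h1 : t ^ 2 * S ≤ t ^ 2 * (2 * C * volume.real Ω * t) := by nlinarith
  exact le_of_mul_le_mul_left h1 (by positivity)


/-- Regularized norm. -/
noncomputable def rho {N : ℕ} (ε : ℝ) (v : Eu N) : ℝ := √(‖v‖ ^ 2 + ε ^ 2)

/-- Regularized direction. -/
noncomputable def mm {N : ℕ} (ε : ℝ) (v : Eu N) : Eu N := (rho ε v)⁻¹ • v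

section rho
variable {N : ℕ} {ε : ℝ}

lemma rho_pos (hε : 0 < ε) (v : Eu N) : 0 < rho ε v := Real.sqrt_pos.2 (by positivity)

lemma rho_sq (ε : ℝ) (v : Eu N) : rho ε v ^ 2 = ‖v‖ ^ 2 + ε ^ 2 := Real.sq_sqrt (by positivity)

lemma norm_le_rho (ε : ℝ) (v : Eu N) : ‖v‖ ≤ rho ε v :=
  Real.le_sqrt_of_sq_le (by nlinarith [sq_nonneg ε])

lemma eps_le_rho (ε : ℝ) (v : Eu N) : ε ≤ rho ε v :=
  Real.le_sqrt_of_sq_le (by nlinarith [sq_nonneg ‖v‖])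

lemma rho_le (hε : 0 < ε) (v : Eu N) : rho ε v ≤ ‖v‖ + ε :=
  Real.sqrt_le_iff.2 ⟨by positivity, by nlinarith [mul_nonneg (norm_nonneg v) hε.le]⟩

lemma norm_mm_le (hε : 0 < ε) (v : Eu N) : ‖mm ε v‖ ≤ 1 := by
  have h := rho_pos hε v
  rw [mm, norm_smul, norm_inv, Real.norm_eq_abs, abs_of_pos h, inv_mul_le_iff₀ h, mul_one]
  exact norm_le_rho ε v

lemma contDiff_rho (hε : 0 < ε) : ContDiff ℝ 1 (rho ε : Eu N → ℝ) := by
  unfold rho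
  refine ((contDiff_id.norm_sq ℝ).add contDiff_const).sqrt fun v => ?_
  have : 0 < ‖v‖ ^ 2 + ε ^ 2 := by positivity
  exact this.ne'

lemma continuous_mm (hε : 0 < ε) : Continuous (mm ε : Eu N → Eu N) :=
  ((contDiff_rho hε).continuous.inv₀ fun v => (rho_pos hε v).ne').smul continuous_id

lemma hasFDerivAt_rho (hε : 0 < ε) (v : Eu N) : HasFDerivAt (rho ε) (innerSL ℝ (mm ε v)) v := by
  have h1 := ((hasFDerivAt_id v).norm_sq).add_const (ε ^ 2)
  have h0 : ‖v‖ ^ 2 + ε ^ 2 ≠ 0 := by positivity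
  have h2 := h1.sqrt h0
  refine h2.congr_fderiv ?_
  ext w
  have hp := (rho_pos hε v).ne'
  simp only [mm, id]
  change _ = ⟪(rho ε v)⁻¹ • v, w⟫
  rw [real_inner_smul_left]
  simp only [smul_apply, ContinuousLinearMap.comp_apply,
    ContinuousLinearMap.id_apply, innerSL_apply_apply, smul_eq_mul, nsmul_eq_mul, Nat.cast_ofNat]
  change 1 / (2 * rho ε v) * (2 * ⟪v, w⟫) = _
  field_simp

end rho

open Filter Topology in
lemma core {N : ℕ} (hN : 0 < N) {Ω : Set (Eu N)} (hΩ : IsOpen Ω) (hb : IsBounded Ω)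
    {X : Eu N → Eu N} {A : Eu N → Eu N →L[ℝ] Eu N} {M C K : ℝ}
    (b : OrthonormalBasis (Fin N) ℝ (Eu N))
    (hX : ContinuousOn X Ω) (hXM : ∀ x ∈ Ω, ‖X x‖ ≤ M)
    (hA : ContinuousOn A Ω) (hM : ∀ x ∈ Ω, ‖A x‖ ≤ M) (hC : 0 ≤ C) (hK : 0 ≤ K)
    (hE : ∀ ε : ℝ, 0 < ε →
      ∫ x in Ω, (∑ j, ‖A x (b j)‖ ^ 2 - ∑ j, ⟪A x (b j), mm ε (X x)⟫ ^ 2) ≤ C * ε ^ 2)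
    (hU : ∀ ε : ℝ, 0 < ε → ∫ x in Ω, ‖X x‖ ^ 2 / rho ε (X x) ≤
      K * ∫ x in Ω, |∑ j, ⟪A x (b j), b j⟫ - ⟪A x (mm ε (X x)), mm ε (X x)⟫| / rho ε (X x)) :
    ∀ x ∈ Ω, X x = 0 := by
  rcases Ω.eq_empty_or_nonempty with rfl | hne
  · simp
  have : Nonempty (Fin N) := ⟨⟨0, hN⟩⟩
  have hM0 : 0 ≤ M := by
    obtain ⟨x, hx⟩ := hne
    exact (norm_nonneg _).trans (hM x hx)
  have hfin : volume Ω ≠ ⊤ := hb.measure_lt_top.ne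
  set D2 : Eu N → ℝ := fun x => ∑ j, ‖A x (b j)‖ ^ 2 with hD2
  set E : ℝ → Eu N → ℝ := fun ε x => D2 x - ∑ j, ⟪A x (b j), mm ε (X x)⟫ ^ 2 with hEdef
  set T : ℝ → Eu N → ℝ := fun ε x =>
    ∑ j, ⟪A x (b j), b j⟫ - ⟪A x (mm ε (X x)), mm ε (X x)⟫ with hT
  have hD2c : ContinuousOn D2 Ω := continuousOn_finsetSum _ fun j _ =>
    (hA.clm_apply continuousOn_const).norm.pow 2
  have hD20 : ∀ x, 0 ≤ D2 x := fun x => Finset.sum_nonneg fun j _ => sq_nonneg _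
  have hD2b : ∀ x ∈ Ω, D2 x ≤ N * M ^ 2 := fun x hx => sum_sq_le b (hM x hx)
  have hmc : ∀ ε, 0 < ε → ContinuousOn (fun x => mm ε (X x)) Ω := fun ε hε =>
    (continuous_mm hε).comp_continuousOn hX
  have hrc : ∀ ε, 0 < ε → ContinuousOn (fun x => rho ε (X x)) Ω := fun ε hε =>
    (contDiff_rho hε).continuous.comp_continuousOn hX
  have hEc : ∀ ε, 0 < ε → ContinuousOn (E ε) Ω := fun ε hε =>
    hD2c.sub (continuousOn_finsetSum _ fun j _ =>
      ((hA.clm_apply continuousOn_const).inner (hmc ε hε)).pow 2)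
  have hTc : ∀ ε, 0 < ε → ContinuousOn (T ε) Ω := fun ε hε =>
    (continuousOn_finsetSum _ fun j _ =>
      (hA.clm_apply continuousOn_const).inner continuousOn_const).sub
      ((hA.clm_apply (hmc ε hε)).inner (hmc ε hε))
  have hTE : ∀ ε, 0 < ε → ∀ x, T ε x ^ 2 ≤ N * E ε x := fun ε hε x => by
    have := trace_cs b (A x) (mm ε (X x)) (norm_mm_le hε _)
    rwa [Fintype.card_fin] at this
  have hN0 : (0 : ℝ) < N := by exact_mod_cast hN
  have hE0 : ∀ ε, 0 < ε → ∀ x, 0 ≤ E ε x := fun ε hε x => by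
    have := (sq_nonneg _).trans (hTE ε hε x)
    exact nonneg_of_mul_nonneg_right this hN0
  have hEle : ∀ ε, ∀ x ∈ Ω, E ε x ≤ N * M ^ 2 := fun ε x hx => by
    have : 0 ≤ ∑ j, ⟪A x (b j), mm ε (X x)⟫ ^ 2 := Finset.sum_nonneg fun j _ => sq_nonneg _
    have := hD2b x hx
    simp only [hEdef]; linarith
  have iE : ∀ ε, 0 < ε → IntegrableOn (E ε) Ω := fun ε hε =>
    integ hΩ hb (hEc ε hε) (C := N * M ^ 2) fun x hx => by
      rw [Real.norm_eq_abs, abs_of_nonneg (hE0 ε hε x)]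
      exact hEle ε x hx
  have hTb : ∀ ε, 0 < ε → ∀ x ∈ Ω, |T ε x| ≤ N * M := fun ε hε x hx => by
    refine abs_le_of_sq_le_sq ?_ (by positivity)
    have h1 := hTE ε hε x
    have h2 := hEle ε x hx
    nlinarith
  have iTr : ∀ ε, 0 < ε → IntegrableOn (fun x => |T ε x| / rho ε (X x)) Ω := fun ε hε =>
    integ hΩ hb ((hTc ε hε).abs.div (hrc ε hε) fun x _ => (rho_pos hε _).ne')
      (C := N * M / ε) fun x hx => by
      have h1 := rho_pos hε (X x)
      rw [Real.norm_eq_abs, abs_of_nonneg (by positivity)]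
      have := hTb ε hε x hx
      have := eps_le_rho ε (X x)
      gcongr
  -- the open set where X does not vanish
  set U : Set (Eu N) := Ω ∩ X ⁻¹' {0}ᶜ with hUdef
  have hUo : IsOpen U := hX.isOpen_inter_preimage hΩ isOpen_compl_singleton
  have hUΩ : U ⊆ Ω := Set.inter_subset_left
  set Z : Set (Eu N) := Ω \ U with hZdef
  have hZm : MeasurableSet Z := hΩ.measurableSet.diff hUo.measurableSet
  have hZΩ : Z ⊆ Ω := Set.sdiff_subset
  have hZX : ∀ x ∈ Z, X x = 0 := by
    rintro x ⟨hx, hxU⟩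
    by_contra h0
    exact hxU ⟨hx, h0⟩
  have iD2 : IntegrableOn D2 Ω := integ hΩ hb hD2c (C := N * M ^ 2) fun x hx => by
    rw [Real.norm_eq_abs, abs_of_nonneg (hD20 x)]
    exact hD2b x hx
  have hZD : ∫ x in Z, D2 x = 0 := by
    refine le_antisymm ?_ (setIntegral_nonneg hZm fun x _ => hD20 x)
    have hle : ∀ ε : ℝ, 0 < ε → ∫ x in Z, D2 x ≤ C * ε ^ 2 := by
      intro ε hε
      calc ∫ x in Z, D2 x = ∫ x in Z, E ε x := by
            refine setIntegral_congr_fun hZm fun x hx => ?_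
            simp [hEdef, hZX x hx, mm]
        _ ≤ ∫ x in Ω, E ε x := setIntegral_mono_set (iE ε hε)
            (Eventually.of_forall fun x => hE0 ε hε x) (LE.le.eventuallyLE hZΩ)
        _ ≤ C * ε ^ 2 := hE ε hε
    have lim : Tendsto (fun ε : ℝ => C * ε ^ 2) (𝓝[>] 0) (𝓝 0) := by
      have : Tendsto (fun ε : ℝ => C * ε ^ 2) (𝓝 0) (𝓝 (C * 0 ^ 2)) :=
        (by fun_prop : Continuous _).tendsto _
      rw [zero_pow two_ne_zero, mul_zero] at this
      exact this.mono_left nhdsWithin_le_nhds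
    exact ge_of_tendsto lim (eventually_mem_nhdsWithin.mono fun ε hε => hle ε hε)
  have hZae : ∀ᵐ x ∂(volume.restrict Z), D2 x = 0 := by
    have := (setIntegral_eq_zero_iff_of_nonneg_ae (Eventually.of_forall hD20)
      (iD2.mono_set hZΩ)).1 hZD
    exact this
  have hZT : ∀ ε, 0 < ε → ∫ x in Z, |T ε x| / rho ε (X x) = 0 := by
    intro ε hε
    refine integral_eq_zero_of_ae ?_
    filter_upwards [hZae] with x hx
    have h1 : T ε x ^ 2 ≤ N * D2 x := (hTE ε hε x).trans (by
      have : 0 ≤ ∑ j, ⟪A x (b j), mm ε (X x)⟫ ^ 2 := Finset.sum_nonneg fun j _ => sq_nonneg _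
      gcongr
      simp only [hEdef]; linarith)
    rw [hx, mul_zero] at h1
    have h2 : T ε x = 0 := by
      have := le_antisymm h1 (sq_nonneg _)
      exact pow_eq_zero_iff (two_ne_zero) |>.1 this
    simp [h2]
  have hsplit : ∀ ε, 0 < ε → ∫ x in Ω, |T ε x| / rho ε (X x) =
      ∫ x in U, |T ε x| / rho ε (X x) := by
    intro ε hε
    have := setIntegral_sdiff hUo.measurableSet (iTr ε hε) hUΩ
    rw [← hZdef, hZT ε hε] at this
    linarith
  set J : ℝ → ℝ := fun ε => ∫ x in U, ε ^ 2 / rho ε (X x) ^ 2 with hJ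
  have hUb : IsBounded U := hb.subset hUΩ
  have iJ : ∀ ε, 0 < ε → IntegrableOn (fun x => ε ^ 2 / rho ε (X x) ^ 2) U := fun ε hε =>
    integ hUo hUb (continuousOn_const.div (((hrc ε hε).mono hUΩ).pow 2)
      fun x _ => pow_ne_zero 2 (rho_pos hε _).ne') (C := 1) fun x hx => by
      have h1 := rho_pos hε (X x)
      rw [Real.norm_eq_abs, abs_of_nonneg (by positivity), div_le_one (by positivity)]
      have := eps_le_rho ε (X x)
      gcongr
  have hTJ : ∀ θ : ℝ, 0 < θ → ∀ ε, 0 < ε → ∫ x in U, |T ε x| / rho ε (X x) ≤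
      θ / 2 * N * C + 1 / (2 * θ) * J ε := by
    intro θ hθ ε hε
    have hpt : ∀ x ∈ U, |T ε x| / rho ε (X x) ≤
        θ / 2 * N / ε ^ 2 * E ε x + 1 / (2 * θ) * (ε ^ 2 / rho ε (X x) ^ 2) := by
      intro x _
      have hr := rho_pos hε (X x)
      have h1 := hTE ε hε x
      have h2 : θ / 2 / ε ^ 2 * |T ε x| ^ 2 ≤ θ / 2 / ε ^ 2 * (N * E ε x) := by
        rw [sq_abs]
        gcongr
      have h3 : |T ε x| / rho ε (X x) ≤
          θ / 2 / ε ^ 2 * |T ε x| ^ 2 + 1 / (2 * θ) * (ε ^ 2 / rho ε (X x) ^ 2) := by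
        have h4 : θ / 2 / ε ^ 2 * |T ε x| ^ 2 + 1 / (2 * θ) * (ε ^ 2 / rho ε (X x) ^ 2) -
          |T ε x| / rho ε (X x) =
          1 / (2 * θ) * (θ * |T ε x| / ε - ε / rho ε (X x)) ^ 2 := by
          field_simp
          ring
        have h5 : 0 ≤ 1 / (2 * θ) * (θ * |T ε x| / ε - ε / rho ε (X x)) ^ 2 := by positivity
        linarith
      calc _ ≤ _ := h3
        _ ≤ θ / 2 / ε ^ 2 * (N * E ε x) + 1 / (2 * θ) * (ε ^ 2 / rho ε (X x) ^ 2) := by linarith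
        _ = _ := by ring
    have k1 : IntegrableOn (fun x => θ / 2 * N / ε ^ 2 * E ε x) U :=
      ((iE ε hε).mono_set hUΩ).const_mul _
    have k2 : IntegrableOn (fun x => 1 / (2 * θ) * (ε ^ 2 / rho ε (X x) ^ 2)) U :=
      (iJ ε hε).const_mul _
    have h1 := setIntegral_mono_on ((iTr ε hε).mono_set hUΩ) (k1.add k2) hUo.measurableSet hpt
    have h2 : ∫ x in U, (θ / 2 * N / ε ^ 2 * E ε x + 1 / (2 * θ) * (ε ^ 2 / rho ε (X x) ^ 2)) =
        θ / 2 * N / ε ^ 2 * (∫ x in U, E ε x) + 1 / (2 * θ) * J ε := by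
      rw [integral_add k1 k2, integral_const_mul, integral_const_mul]
    have h3 : ∫ x in U, E ε x ≤ C * ε ^ 2 := (setIntegral_mono_set (iE ε hε)
            (Eventually.of_forall fun x => hE0 ε hε x)
            (LE.le.eventuallyLE hUΩ)).trans (hE ε hε)
    calc _ ≤ _ := h1
      _ = θ / 2 * N / ε ^ 2 * (∫ x in U, E ε x) + 1 / (2 * θ) * J ε := h2
      _ ≤ θ / 2 * N / ε ^ 2 * (C * ε ^ 2) + 1 / (2 * θ) * J ε := by gcongr
      _ = _ := by field_simp
  have iX : IntegrableOn (fun x => ‖X x‖) Ω := integ hΩ hb hX.norm (C := M) fun x hx => by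
    rw [norm_norm]; exact hXM x hx
  have hXle : ∀ ε, 0 < ε → (∫ x in Ω, ‖X x‖) - ε * volume.real Ω ≤
      ∫ x in Ω, ‖X x‖ ^ 2 / rho ε (X x) := by
    intro ε hε
    have k1 : IntegrableOn (fun _ : Eu N => ε) Ω := integrableOn_const hfin
    have k2 : IntegrableOn (fun x => ‖X x‖ ^ 2 / rho ε (X x)) Ω :=
      integ hΩ hb ((hX.norm.pow 2).div (hrc ε hε) fun x _ => (rho_pos hε _).ne')
        (C := M ^ 2 / ε) fun x hx => by
        have h1 := rho_pos hε (X x)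
        rw [Real.norm_eq_abs, abs_of_nonneg (by positivity)]
        have := hXM x hx
        have := eps_le_rho ε (X x)
        gcongr
    have h1 : ∫ x in Ω, (‖X x‖ - ε) ≤ ∫ x in Ω, ‖X x‖ ^ 2 / rho ε (X x) := by
      refine setIntegral_mono_on (iX.sub k1) k2 hΩ.measurableSet fun x _ => ?_
      have hr := rho_pos hε (X x)
      rw [le_div_iff₀ hr]
      have h2 := rho_sq ε (X x)
      have h3 := norm_le_rho ε (X x)
      have h4 := eps_le_rho ε (X x)
      nlinarith
    rw [integral_sub iX k1, setIntegral_const, smul_eq_mul] at h1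
    linarith
  have hmain : ∀ θ : ℝ, 0 < θ → ∀ ε, 0 < ε → ∫ x in Ω, ‖X x‖ ≤
      ε * volume.real Ω + K * (θ / 2 * N * C + 1 / (2 * θ) * J ε) := by
    intro θ hθ ε hε
    have h1 := hU ε hε
    have h2 := hXle ε hε
    have h3 := hTJ θ hθ ε hε
    rw [← hsplit ε hε] at h3
    have h4 := mul_le_mul_of_nonneg_left h3 hK
    linarith
  have hJ0 : Tendsto J (𝓝[>] 0) (𝓝 0) := by
    suffices hz : Tendsto J (𝓝[>] 0) (𝓝 (∫ x in U, (0 : ℝ))) by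
      simpa using hz
    refine tendsto_integral_filter_of_dominated_convergence (fun _ => (1 : ℝ)) ?_ ?_
      (integrableOn_const hUb.measure_lt_top.ne) ?_
    · exact eventually_mem_nhdsWithin.mono fun ε hε => (iJ ε hε).aestronglyMeasurable
    · refine eventually_mem_nhdsWithin.mono fun ε hε => Eventually.of_forall fun x => ?_
      have hε : 0 < ε := hε
      have h1 := rho_pos hε (X x)
      rw [Real.norm_eq_abs, abs_of_nonneg (by positivity), div_le_one (by positivity)]
      have := eps_le_rho ε (X x)
      gcongr
    · refine (ae_restrict_iff' hUo.measurableSet).2 (Eventually.of_forall fun x hx => ?_)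
      have hx0 : X x ≠ 0 := hx.2
      have hn : ‖X x‖ ^ 2 ≠ 0 := pow_ne_zero 2 (norm_ne_zero_iff.2 hx0)
      have hc : ContinuousAt (fun ε : ℝ => ε ^ 2 / (‖X x‖ ^ 2 + ε ^ 2)) 0 := by
        refine ContinuousAt.div (by fun_prop) (by fun_prop) ?_
        simpa using hx0
      have h2 : Tendsto (fun ε : ℝ => ε ^ 2 / (‖X x‖ ^ 2 + ε ^ 2)) (𝓝 0) (𝓝 0) := by
        simpa using hc.tendsto
      simp_rw [rho_sq]
      exact h2.mono_left nhdsWithin_le_nhds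
  have hθ : ∀ θ : ℝ, 0 < θ → ∫ x in Ω, ‖X x‖ ≤ K * (θ / 2 * N * C) := by
    intro θ hθ
    have l1 : Tendsto (fun ε : ℝ => ε) (𝓝[>] 0) (𝓝 0) := tendsto_id.mono_left nhdsWithin_le_nhds
    have lim : Tendsto (fun ε => ε * volume.real Ω + K * (θ / 2 * N * C + 1 / (2 * θ) * J ε))
        (𝓝[>] 0) (𝓝 (0 * volume.real Ω + K * (θ / 2 * N * C + 1 / (2 * θ) * 0))) :=
      (l1.mul_const _).add ((tendsto_const_nhds.add (hJ0.const_mul _)).const_mul _)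
    rw [zero_mul, mul_zero, add_zero, zero_add] at lim
    exact ge_of_tendsto lim (eventually_mem_nhdsWithin.mono fun ε hε => hmain θ hθ ε hε)
  have hX0 : ∫ x in Ω, ‖X x‖ ≤ 0 := by
    have lim : Tendsto (fun θ : ℝ => K * (θ / 2 * N * C)) (𝓝[>] 0) (𝓝 0) := by
      have : Tendsto (fun θ : ℝ => K * (θ / 2 * N * C)) (𝓝 0) (𝓝 (K * (0 / 2 * N * C))) :=
        (by fun_prop : Continuous _).tendsto _
      rw [zero_div, zero_mul, zero_mul, mul_zero] at this
      exact this.mono_left nhdsWithin_le_nhds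
    exact ge_of_tendsto lim (eventually_mem_nhdsWithin.mono fun θ hh => hθ θ hh)
  have hX0' : ∫ x in Ω, ‖X x‖ = 0 :=
    le_antisymm hX0 (integral_nonneg fun x => norm_nonneg _)
  have hae := (setIntegral_eq_zero_iff_of_nonneg_ae
    (Eventually.of_forall fun x => norm_nonneg (X x)) iX).1 hX0'
  have := Measure.eqOn_open_of_ae_eq hae hΩ hX.norm continuousOn_const
  intro x hx
  exact norm_eq_zero.1 (this hx)


lemma grad_bound {N : ℕ} {φ : Eu N → ℝ} {L : Eu N →L[ℝ] ℝ} {x : Eu N} (h : HasFDerivAt φ L x)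
    {M : ℝ} (hM : 0 ≤ M) (hL : ∀ v, |L v| ≤ M * ‖v‖) : ‖gradient φ x‖ ≤ M := by
  have h1 : gradient φ x = (InnerProductSpace.toDual ℝ (Eu N)).symm L := by
    rw [← h.fderiv]; rfl
  rw [h1, LinearIsometryEquiv.norm_map]
  exact L.opNorm_le_bound hM hL

open Filter Topology in
lemma main {N : ℕ} (hN : 2 ≤ N)
    (Ω : Set (Eu N)) (hΩ : IsOpen Ω)
    (hb : IsBounded Ω) (hne : Ω.Nonempty) (hconv : Convex ℝ Ω)
    (f : ℝ → ℝ) (hf : ContDiff ℝ 1 f)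
    (u : Eu N → ℝ)
    (V : Set (Eu N)) (hV_open : IsOpen V)
    (hV : closure Ω ⊆ V) (hu : ContDiffOn ℝ 1 u V)
    (hu2 : ContDiffOn ℝ 2 u (closure Ω))
    (hweak : ∀ φ : Eu N → ℝ, ContDiff ℝ 1 φ →
      ∫ x in Ω, ⟪gradient u x, gradient φ x⟫ = ∫ x in Ω, f (u x) * φ x)
    (hstable : ∀ φ : Eu N → ℝ, ContDiff ℝ 1 φ →
      ∫ x in Ω, deriv f (u x) * (φ x) ^ 2 ≤ ∫ x in Ω, ‖gradient φ x‖ ^ 2) :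
    ∃ c : ℝ, ∀ x ∈ closure Ω, u x = c := by
  have hΩc : Ω ⊆ closure Ω := subset_closure
  have hcomp : IsCompact (closure Ω) := hb.isCompact_closure
  have hfin : volume Ω ≠ ⊤ := hb.measure_lt_top.ne
  obtain ⟨hXc, hX1, ⟨M, hM⟩, hsym⟩ := data hΩ hb hconv hne hV_open hV hu hu2
  set X : Eu N → Eu N := gradient u with hXdef
  set b : OrthonormalBasis (Fin N) ℝ (Eu N) := EuclideanSpace.basisFun (Fin N) ℝ with hbdef
  have hXcΩ : ContinuousOn X Ω := hXc.mono hΩc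
  have huc : ContinuousOn u (closure Ω) := hu2.continuousOn
  have hucΩ := huc.mono hΩc
  have hu1 : ContDiffOn ℝ 1 u Ω := hu.mono (hΩc.trans hV)
  have hfu : ContinuousOn (fun x => f (u x)) (closure Ω) := hf.continuous.comp_continuousOn huc
  have hdf : Continuous (deriv f) := hf.continuous_deriv le_rfl
  have hdfu : ContinuousOn (fun x => deriv f (u x)) (closure Ω) := hdf.comp_continuousOn huc
  obtain ⟨K1, hK1⟩ := hcomp.exists_bound_of_continuousOn hXc
  obtain ⟨K2, hK2⟩ := hcomp.exists_bound_of_continuousOn huc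
  obtain ⟨K3, hK3⟩ := hcomp.exists_bound_of_continuousOn hfu
  obtain ⟨K4, hK4⟩ := hcomp.exists_bound_of_continuousOn hdfu
  obtain ⟨K, hK0, hMK, hXK, huK, hfuK, hdfK⟩ : ∃ K : ℝ, 0 ≤ K ∧
      (∀ x ∈ Ω, ‖fderiv ℝ X x‖ ≤ K) ∧ (∀ x ∈ Ω, ‖X x‖ ≤ K) ∧
      (∀ x ∈ Ω, |u x| ≤ K) ∧ (∀ x ∈ Ω, |f (u x)| ≤ K) ∧ (∀ x ∈ Ω, |deriv f (u x)| ≤ K) := by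
    refine ⟨max 0 (max M (max K1 (max K2 (max K3 K4)))), le_max_left _ _, ?_, ?_, ?_, ?_, ?_⟩
    · exact fun x hx => (hM x hx).trans (by simp)
    · exact fun x hx => (hK1 x (hΩc hx)).trans (by simp)
    · exact fun x hx => (hK2 x (hΩc hx)).trans (by simp)
    · exact fun x hx => (hK3 x (hΩc hx)).trans (by simp)
    · exact fun x hx => (hK4 x (hΩc hx)).trans (by simp)
  have hfuΩ := hfu.mono hΩc
  have hdfuΩ := hdfu.mono hΩc
  have hDX : ContinuousOn (fderiv ℝ X) Ω := hX1.continuousOn_fderiv_of_isOpen hΩ le_rfl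
  have hXd : ∀ x ∈ Ω, HasFDerivAt X (fderiv ℝ X x) x := fun x hx =>
    ((hX1.contDiffAt (hΩ.mem_nhds hx)).differentiableAt (by norm_num)).hasFDerivAt
  have hud : ∀ x ∈ Ω, HasFDerivAt u (innerSL ℝ (X x)) x := fun x hx => by
    have := ((hu1.contDiffAt (hΩ.mem_nhds hx)).differentiableAt (by norm_num)).hasFDerivAt
    refine this.congr_fderiv ?_
    ext v
    rw [innerSL_apply_apply, hXdef, inner_gradient_left]
  -- interior equation
  have hpde := pde hΩ b hX1 hfuΩ hweak
  -- Kadlec inequality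
  have hkad : ∫ x in Ω, ∑ j, ‖fderiv ℝ X x (b j)‖ ^ 2 ≤
      ∫ x in Ω, (∑ j, ⟪fderiv ℝ X x (b j), b j⟫) ^ 2 := by
    refine kadlec hΩ hb hconv hne b hX1 hXc hMK hsym (fun y hy t ht => ?_) ?_
    · exact boundary hΩ hb hconv hK0 hXc hXK hfuΩ hfuK hweak hy ht
    · rw [setIntegral_congr_fun hΩ.measurableSet hpde, integral_neg]
      have h1 := hweak (fun _ => 1) contDiff_const
      have h2 : ∀ x : Eu N, gradient (fun _ : Eu N => (1 : ℝ)) x = 0 := fun x => by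
        simp [gradient]
      simp only [h2, inner_zero_right, integral_zero, mul_one] at h1
      rw [← h1, neg_zero]
  -- testing with f ∘ u
  have htest : ∫ x in Ω, deriv f (u x) * ‖X x‖ ^ 2 =
      ∫ x in Ω, (∑ j, ⟪fderiv ℝ X x (b j), b j⟫) ^ 2 := by
    have hd : ∀ x ∈ Ω, HasFDerivAt (fun x => f (u x)) (deriv f (u x) • innerSL ℝ (X x)) x :=
      fun x hx => ((hf.differentiable (by norm_num)) (u x)).hasDerivAt.comp_hasFDerivAt x (hud x hx)
    have h1 := weak_ext hΩ hb hconv hne hXcΩ hXK hfuΩ hfuK hweak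
      (φ := fun x => f (u x)) (M := max K (K * K)) (hf.comp_contDiffOn hu1)
      (fun x hx => (hfuK x hx).trans (le_max_left _ _))
      (fun x hx => (grad_bound (hd x hx) (M := K * K) (by positivity) fun v => by
        simp only [smul_apply, innerSL_apply_apply, smul_eq_mul, abs_mul]
        rw [mul_assoc]
        have h2 := hdfK x hx
        have h3 := hXK x hx
        have h4 := abs_real_inner_le_norm (X x) v
        have h5 : ‖X x‖ * ‖v‖ ≤ K * ‖v‖ := by gcongr
        have h6 := h4.trans h5
        gcongr).trans (le_max_right _ _))
    calc _ = ∫ x in Ω, ⟪X x, gradient (fun x => f (u x)) x⟫ := by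
          refine setIntegral_congr_fun hΩ.measurableSet fun x hx => ?_
          rw [real_inner_comm, inner_gradient_left, (hd x hx).fderiv]
          simp only [smul_apply, innerSL_apply_apply, smul_eq_mul]
          rw [real_inner_self_eq_norm_sq]
      _ = ∫ x in Ω, f (u x) * f (u x) := h1
      _ = _ := by
          refine setIntegral_congr_fun hΩ.measurableSet fun x hx => ?_
          rw [hpde x hx]; ring
  have hρd : ∀ ε : ℝ, 0 < ε → ∀ x ∈ Ω, HasFDerivAt (fun x => rho ε (X x))
      ((innerSL ℝ (mm ε (X x))).comp (fderiv ℝ X x)) x := fun ε hε x hx =>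
    (hasFDerivAt_rho hε (X x)).comp x (hXd x hx)
  have hρ1 : ∀ ε : ℝ, 0 < ε → ContDiffOn ℝ 1 (fun x => rho ε (X x)) Ω := fun ε hε =>
    (contDiff_rho hε).comp_contDiffOn hX1
  have hρL : ∀ ε : ℝ, 0 < ε → ∀ x ∈ Ω, ∀ v, |⟪mm ε (X x), fderiv ℝ X x v⟫| ≤ K * ‖v‖ := by
    intro ε hε x hx v
    refine (abs_real_inner_le_norm _ _).trans ?_
    have h1 := norm_mm_le hε (X x)
    have h2 : ‖fderiv ℝ X x v‖ ≤ K * ‖v‖ :=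
      (ContinuousLinearMap.le_opNorm _ _).trans (by gcongr; exact hMK x hx)
    calc _ ≤ 1 * (K * ‖v‖) := by gcongr
      _ = _ := one_mul _
  set C : ℝ := K * volume.real Ω with hC
  have hC0 : 0 ≤ C := by positivity
  have idf : IntegrableOn (fun x => deriv f (u x)) Ω := integ hΩ hb hdfuΩ hdfK
  have hX0 : ∀ x ∈ Ω, X x = 0 := by
    refine core (by omega) hΩ hb (M := K) (C := C) (K := K) b hXcΩ hXK hDX hMK hC0 hK0 ?_ ?_
    · intro ε hε
      have hs := stable_ext hΩ hb hconv hne hdfuΩ hdfK hstable (hρ1 ε hε) (M := K + ε)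
        (fun x hx => by
          rw [abs_of_pos (rho_pos hε _)]
          exact (rho_le hε _).trans (by gcongr; exact hXK x hx))
        (fun x hx => (grad_bound (hρd ε hε x hx) hK0 fun v => hρL ε hε x hx v).trans
          (by linarith))
      have e1 : ∫ x in Ω, ‖gradient (fun x => rho ε (X x)) x‖ ^ 2 =
          ∫ x in Ω, ∑ j, ⟪fderiv ℝ X x (b j), mm ε (X x)⟫ ^ 2 := by
        refine setIntegral_congr_fun hΩ.measurableSet fun x hx => ?_
        rw [← real_inner_self_eq_norm_sq, ← b.sum_inner_mul_inner]
        refine Finset.sum_congr rfl fun j _ => ?_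
        rw [real_inner_comm (gradient _ x) (b j), inner_gradient_left, (hρd ε hε x hx).fderiv]
        simp only [ContinuousLinearMap.comp_apply, innerSL_apply_apply]
        rw [real_inner_comm (mm ε (X x)), sq]
      have iX2 : IntegrableOn (fun x => deriv f (u x) * ‖X x‖ ^ 2) Ω :=
        integ hΩ hb (hdfuΩ.mul (hXcΩ.norm.pow 2)) (C := K * K ^ 2) fun x hx => by
          rw [norm_mul, norm_pow, norm_norm, Real.norm_eq_abs]
          have := hdfK x hx
          have := hXK x hx
          gcongr
      have e2 : ∫ x in Ω, deriv f (u x) * rho ε (X x) ^ 2 =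
          (∫ x in Ω, deriv f (u x) * ‖X x‖ ^ 2) + ε ^ 2 * ∫ x in Ω, deriv f (u x) := by
        rw [← integral_const_mul, ← integral_add iX2 (idf.const_mul _)]
        refine setIntegral_congr_fun hΩ.measurableSet fun x hx => ?_
        rw [rho_sq]; ring
      have e3 : |∫ x in Ω, deriv f (u x)| ≤ C := by
        have := norm_setIntegral_le_of_norm_le_const (μ := volume)
          (f := fun x => deriv f (u x)) (C := K) hb.measure_lt_top hdfK
        exact this
      have e4 := (abs_le.1 e3).1
      have hmc : ContinuousOn (fun x => mm ε (X x)) Ω := (continuous_mm hε).comp_continuousOn hXcΩ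
      have i1 : IntegrableOn (fun x => ∑ j, ‖fderiv ℝ X x (b j)‖ ^ 2) Ω :=
        integ hΩ hb (continuousOn_finsetSum _ fun j _ =>
          (hDX.clm_apply continuousOn_const).norm.pow 2) (C := N * K ^ 2) fun x hx => by
          rw [Real.norm_eq_abs, abs_of_nonneg (Finset.sum_nonneg fun j _ => sq_nonneg _)]
          exact sum_sq_le b (hMK x hx)
      have i2 : IntegrableOn (fun x => ∑ j, ⟪fderiv ℝ X x (b j), mm ε (X x)⟫ ^ 2) Ω :=
        integ hΩ hb (continuousOn_finsetSum _ fun j _ =>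
          ((hDX.clm_apply continuousOn_const).inner hmc).pow 2) (C := N * K ^ 2) fun x hx => by
          rw [Real.norm_eq_abs, abs_of_nonneg (Finset.sum_nonneg fun j _ => sq_nonneg _)]
          refine (Finset.sum_le_card_nsmul _ _ (K ^ 2) fun j _ => ?_).trans (by simp)
          rw [real_inner_comm, ← sq_abs]
          have := hρL ε hε x hx (b j)
          rw [b.norm_eq_one, mul_one] at this
          gcongr
      rw [integral_sub i1 i2]
      rw [e1, e2, htest] at hs
      nlinarith [mul_le_mul_of_nonneg_left e4 (sq_nonneg ε)]
    · intro ε hε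
      have hrc : ContinuousOn (fun x => rho ε (X x)) Ω := (hρ1 ε hε).continuousOn
      have hrne : ∀ x, rho ε (X x) ≠ 0 := fun x => (rho_pos hε _).ne'
      have hmc : ContinuousOn (fun x => mm ε (X x)) Ω := (continuous_mm hε).comp_continuousOn hXcΩ
      have hd : ∀ x ∈ Ω, HasFDerivAt (fun x => u x * (rho ε (X x))⁻¹)
          (u x • (-(rho ε (X x) ^ 2)⁻¹ • (innerSL ℝ (mm ε (X x))).comp (fderiv ℝ X x)) +
            (rho ε (X x))⁻¹ • innerSL ℝ (X x)) x := fun x hx =>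
        (hud x hx).mul ((hasDerivAt_inv (hrne x)).comp_hasFDerivAt x (hρd ε hε x hx))
      have hinv : ∀ x, (rho ε (X x))⁻¹ ≤ ε⁻¹ := fun x => by
        have := eps_le_rho ε (X x)
        gcongr
      have hinv0 : ∀ x, 0 ≤ (rho ε (X x))⁻¹ := fun x => inv_nonneg.2 (rho_pos hε _).le
      have h1 := weak_ext hΩ hb hconv hne hXcΩ hXK hfuΩ hfuK hweak
        (φ := fun x => u x * (rho ε (X x))⁻¹)
        (M := max (K * ε⁻¹) (K * ((ε⁻¹) ^ 2 * K) + ε⁻¹ * K))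
        (hu1.mul ((hρ1 ε hε).inv fun x _ => hrne x))
        (fun x hx => by
          refine le_trans ?_ (le_max_left _ _)
          rw [abs_mul, abs_of_nonneg (hinv0 x)]
          have := huK x hx
          have := hinv x
          have := hinv0 x
          gcongr)
        (fun x hx => (grad_bound (hd x hx) (M := K * ((ε⁻¹) ^ 2 * K) + ε⁻¹ * K)
          (by positivity) fun v => by
            simp only [add_apply, smul_apply, innerSL_apply_apply, smul_eq_mul,
              ContinuousLinearMap.comp_apply]
            have q1 := hρL ε hε x hx v
            have q2 : |⟪X x, v⟫| ≤ K * ‖v‖ := (abs_real_inner_le_norm _ _).trans (by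
              have := hXK x hx
              gcongr)
            have q3 := hinv x
            have q4 := hinv0 x
            have q5 := huK x hx
            refine (abs_add_le _ _).trans ?_
            rw [abs_mul, abs_mul, abs_mul, abs_neg, ← inv_pow, abs_pow, abs_of_nonneg q4]
            have q6 : |u x| * ((rho ε (X x))⁻¹ ^ 2 * |⟪mm ε (X x), fderiv ℝ X x v⟫|) ≤
              K * ((ε⁻¹) ^ 2 * (K * ‖v‖)) := by gcongr
            have q7 : (rho ε (X x))⁻¹ * |⟪X x, v⟫| ≤ ε⁻¹ * (K * ‖v‖) := by gcongr
            refine (add_le_add q6 q7).trans (le_of_eq (by ring))).trans (le_max_right _ _))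
      have hgr : ∀ x ∈ Ω, ⟪X x, gradient (fun x => u x * (rho ε (X x))⁻¹) x⟫ =
          ‖X x‖ ^ 2 / rho ε (X x) - u x / rho ε (X x) *
            ⟪fderiv ℝ X x (mm ε (X x)), mm ε (X x)⟫ := by
        intro x hx
        rw [real_inner_comm, inner_gradient_left, (hd x hx).fderiv]
        simp only [add_apply, smul_apply, innerSL_apply_apply, smul_eq_mul,
          ContinuousLinearMap.comp_apply]
        have q1 : X x = rho ε (X x) • mm ε (X x) := by
          rw [mm, smul_smul, mul_inv_cancel₀ (hrne x), one_smul]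
        have q2 : fderiv ℝ X x (X x) = rho ε (X x) • fderiv ℝ X x (mm ε (X x)) := by
          rw [← map_smul, ← q1]
        rw [q2, real_inner_smul_right, real_inner_self_eq_norm_sq,
          real_inner_comm (fderiv ℝ X x (mm ε (X x)))]
        have := hrne x
        field_simp
        ring
      set T : Eu N → ℝ := fun x => ∑ j, ⟪fderiv ℝ X x (b j), b j⟫ -
        ⟪fderiv ℝ X x (mm ε (X x)), mm ε (X x)⟫ with hT
      have hfX : ∀ x ∈ Ω, f (u x) = - ∑ j, ⟪fderiv ℝ X x (b j), b j⟫ := fun x hx => by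
        rw [hpde x hx, neg_neg]
      set Q : Eu N → ℝ := fun x => ⟪fderiv ℝ X x (mm ε (X x)), mm ε (X x)⟫ with hQ
      have hQc : ContinuousOn Q Ω := (hDX.clm_apply hmc).inner hmc
      have hQb : ∀ x ∈ Ω, |Q x| ≤ K := fun x hx => by
        have q1 := hρL ε hε x hx (mm ε (X x))
        have q2 := norm_mm_le hε (X x)
        simp only [hQ]
        rw [real_inner_comm]
        exact q1.trans (by nlinarith)
      have hTc : ContinuousOn T Ω := (continuousOn_finsetSum _ fun j _ =>
        (hDX.clm_apply continuousOn_const).inner continuousOn_const).sub hQc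
      have hTb : ∀ x ∈ Ω, |T x| ≤ N * K + K := fun x hx =>
        (abs_sub _ _).trans (add_le_add (abs_div_le b (hMK x hx)) (hQb x hx))
      have hur : ∀ x ∈ Ω, |u x / rho ε (X x)| ≤ K * ε⁻¹ := fun x hx => by
        rw [div_eq_mul_inv, abs_mul, abs_of_nonneg (hinv0 x)]
        have := huK x hx
        have := hinv x
        have := hinv0 x
        gcongr
      have hurc : ContinuousOn (fun x => u x / rho ε (X x)) Ω := hucΩ.div hrc fun x _ => hrne x
      have iA : IntegrableOn (fun x => ‖X x‖ ^ 2 / rho ε (X x)) Ω :=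
        integ hΩ hb ((hXcΩ.norm.pow 2).div hrc fun x _ => hrne x) (C := K ^ 2 * ε⁻¹)
          fun x hx => by
          rw [div_eq_mul_inv, norm_mul, norm_pow, norm_norm, Real.norm_eq_abs,
            abs_of_nonneg (hinv0 x)]
          have := hXK x hx
          have := hinv x
          have := hinv0 x
          gcongr
      have iB : IntegrableOn (fun x => u x / rho ε (X x) * Q x) Ω :=
        integ hΩ hb (hurc.mul hQc) (C := K * ε⁻¹ * K) fun x hx => by
          rw [norm_mul]
          have := hur x hx
          have := hQb x hx
          exact mul_le_mul (hur x hx) (hQb x hx) (abs_nonneg _) (by positivity)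
      have iT : IntegrableOn (fun x => u x / rho ε (X x) * T x) Ω :=
        integ hΩ hb (hurc.mul hTc) (C := K * ε⁻¹ * (N * K + K)) fun x hx => by
          rw [norm_mul]
          exact mul_le_mul (hur x hx) (hTb x hx) (abs_nonneg _) (by positivity)
      have iTn : IntegrableOn (fun x => - (u x / rho ε (X x) * T x)) Ω := iT.neg
      have iT2 : IntegrableOn (fun x => |T x| / rho ε (X x)) Ω :=
        integ hΩ hb (hTc.abs.div hrc fun x _ => hrne x) (C := (N * K + K) * ε⁻¹) fun x hx => by
          rw [div_eq_mul_inv, norm_mul, Real.norm_eq_abs, Real.norm_eq_abs, abs_abs,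
            abs_of_nonneg (hinv0 x)]
          exact mul_le_mul (hTb x hx) (hinv x) (hinv0 x) (by positivity)
      have h2 : ∫ x in Ω, ‖X x‖ ^ 2 / rho ε (X x) = ∫ x in Ω, - (u x / rho ε (X x) * T x) := by
        rw [setIntegral_congr_fun hΩ.measurableSet hgr, integral_sub iA iB] at h1
        have h3 : ∫ x in Ω, f (u x) * (u x * (rho ε (X x))⁻¹) =
            ∫ x in Ω, (- (u x / rho ε (X x) * T x) - u x / rho ε (X x) * Q x) := by
          refine setIntegral_congr_fun hΩ.measurableSet fun x hx => ?_
          simp only [hT]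
          rw [hfX x hx]
          ring
        rw [h3, integral_sub iTn iB] at h1
        linarith
      rw [h2, ← integral_const_mul]
      refine setIntegral_mono_on iTn (iT2.const_mul K) hΩ.measurableSet fun x hx => ?_
      refine (neg_le_abs _).trans ?_
      rw [abs_mul, abs_div, abs_of_pos (rho_pos hε (X x)), div_mul_eq_mul_div, mul_div_assoc]
      have := huK x hx
      have := rho_pos hε (X x)
      gcongr
  -- conclusion
  obtain ⟨x0, hx0⟩ := hne
  refine ⟨u x0, fun x hx => ?_⟩
  have hconst : ∀ x ∈ Ω, u x = u x0 := by
    intro x hx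
    refine hconv.is_const_of_fderivWithin_eq_zero (𝕜 := ℝ)
      (fun z hz => (hud z hz).differentiableAt.differentiableWithinAt) (fun z hz => ?_) hx hx0
    rw [fderivWithin_of_isOpen hΩ hz, (hud z hz).fderiv, hX0 z hz, map_zero]
  have hcl : Set.EqOn u (fun _ => u x0) (closure Ω) :=
    Set.EqOn.of_subset_closure hconst huc continuousOn_const hΩc subset_rfl
  exact hcl hx

end CH

/-- **Casten–Holland, Matano.** In a bounded convex open set `Ω ⊆ ℝ^N`,
`N ≥ 2`, with `C²` boundary, every stable weak Neumann solution of `-Δu = f(u)` which is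
`C²` up to the boundary is constant on `closure Ω`. -/
theorem stmt_4 {N : ℕ} (hN : 2 ≤ N)
    (Ω : Set (EuclideanSpace ℝ (Fin N))) (hΩ_open : IsOpen Ω)
    (hΩ_bdd : IsBounded Ω) (hΩ_conn : IsConnected Ω) (hΩ_conv : Convex ℝ Ω)
    (hΩ_bdy : ∀ x ∈ frontier Ω, ∃ U g, IsC2LocalDefining Ω x U g)
    (f : ℝ → ℝ) (hf : ContDiff ℝ 1 f)
    (u : EuclideanSpace ℝ (Fin N) → ℝ)
    (V : Set (EuclideanSpace ℝ (Fin N))) (hV_open : IsOpen V)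
    (hV : closure Ω ⊆ V) (hu : ContDiffOn ℝ 1 u V)
    (hu2 : ContDiffOn ℝ 2 u (closure Ω))
    (hweak : ∀ φ : EuclideanSpace ℝ (Fin N) → ℝ, ContDiff ℝ 1 φ →
      ∫ x in Ω, ⟪gradient u x, gradient φ x⟫ = ∫ x in Ω, f (u x) * φ x)
    (hstable : ∀ φ : EuclideanSpace ℝ (Fin N) → ℝ, ContDiff ℝ 1 φ →
      ∫ x in Ω, deriv f (u x) * (φ x) ^ 2 ≤ ∫ x in Ω, ‖gradient φ x‖ ^ 2) :
    ∃ c : ℝ, ∀ x ∈ closure Ω, u x = c := by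
  exact CH.main hN Ω hΩ_open hΩ_bdd hΩ_conn.nonempty hΩ_conv f hf u V hV_open hV hu hu2 hweak hstable
end

section
/- Let Ω ⊂ ℝ^N (N ≥ 2) be a bounded connected open set, let ε > 0, and let a ≤ 1. Define f_a(t) = e^t − 1 − a·t. Then every weak Neumann solution u of −εΔu = f_a(u) in Ω with u ≥ 0 on Ω is identically zero. -/
open MeasureTheory Bornology
open scoped RealInnerProductSpace

/-- For `a ≤ 1` and `f_a(t) = e^t - 1 - a t`, every nonnegative weak
Neumann solution of `-εΔu = f_a(u)` in a bounded connected open `Ω ⊆ ℝ^N`, `N ≥ 2`,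
is identically zero. -/
theorem stmt_5 {N : ℕ} (hN : 2 ≤ N)
    (Ω : Set (EuclideanSpace ℝ (Fin N))) (hΩ_open : IsOpen Ω)
    (hΩ_bdd : IsBounded Ω) (hΩ_conn : IsConnected Ω)
    (ε : ℝ) (hε : 0 < ε) (a : ℝ) (ha : a ≤ 1)
    (u : EuclideanSpace ℝ (Fin N) → ℝ)
    (V : Set (EuclideanSpace ℝ (Fin N))) (hV_open : IsOpen V)
    (hV : closure Ω ⊆ V) (hu : ContDiffOn ℝ 1 u V)
    (hweak : ∀ φ : EuclideanSpace ℝ (Fin N) → ℝ, ContDiff ℝ 1 φ →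
      ε * ∫ x in Ω, ⟪gradient u x, gradient φ x⟫ =
        ∫ x in Ω, (Real.exp (u x) - 1 - a * u x) * φ x)
    (hu_nonneg : ∀ x ∈ Ω, 0 ≤ u x) :
    ∀ x ∈ Ω, u x = 0 := by
  have hc : ContinuousOn u (closure Ω) := hu.continuousOn.mono hV
  have hfc : ContinuousOn (fun x => Real.exp (u x) - 1 - a * u x) (closure Ω) := by
    fun_prop
  have hcomp : IsCompact (closure Ω) := hΩ_bdd.isCompact_closure
  have hint : IntegrableOn (fun x => Real.exp (u x) - 1 - a * u x) Ω :=
    (hfc.integrableOn_compact hcomp).mono_set subset_closure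
  have h1 := hweak (fun _ => 1) contDiff_const
  have hgrad : ∀ x, gradient (fun _ : EuclideanSpace ℝ (Fin N) => (1 : ℝ)) x = 0 := by
    intro x
    simp [gradient]
  simp only [hgrad, inner_zero_right, integral_zero, mul_zero, mul_one] at h1
  have hnn : ∀ x ∈ Ω, 0 ≤ Real.exp (u x) - 1 - a * u x := by
    intro x hx
    have := Real.add_one_le_exp (u x)
    nlinarith [hu_nonneg x hx]
  have hae := (setIntegral_eq_zero_iff_of_nonneg_ae
    ((ae_restrict_iff' hΩ_open.measurableSet).2 (Filter.Eventually.of_forall hnn)) hint).1 h1.symm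
  have heq := Measure.eqOn_open_of_ae_eq hae hΩ_open (hfc.mono subset_closure) continuousOn_const
  intro x hx
  by_contra hne
  have h2 := heq hx
  simp only [Pi.zero_apply] at h2
  have := Real.add_one_lt_exp hne
  nlinarith [hu_nonneg x hx]
end

section
/- Let Ω ⊂ ℝ² be a bounded open set with boundary of class C². Then there exist constants C > 0 and s₀ > 0, depending only on Ω, such that for every function u continuously differentiable on the closure of Ω with ‖u‖_{H¹} := (∫_Ω u² dx + ∫_Ω |∇u|² dx)^{1/2} ≤ s₀, one has ∑_{k=3}^{∞} (1/k!)∫_Ω |u(x)|^k dx ≤ C·‖u‖_{H¹}³; in particular |∫_Ω (e^u − 1 − u − u²/2) dx| ≤ C·‖u‖_{H¹}³. -/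
open MeasureTheory Bornology

/-- The Sobolev-type norm `‖u‖_{H¹} = (∫_Ω u² + ∫_Ω |∇u|²)^{1/2}`. -/
noncomputable def H1norm (Ω : Set (EuclideanSpace ℝ (Fin 2)))
    (u : EuclideanSpace ℝ (Fin 2) → ℝ) : ℝ :=
  Real.sqrt ((∫ x in Ω, u x ^ 2) + ∫ x in Ω, ‖gradient u x‖ ^ 2)

open scoped ENNReal NNReal


/-- one-dimensional estimate along a segment -/
lemma aux_segment (Ω : Set (EuclideanSpace ℝ (Fin 2))) (hO : IsOpen Ω) (w : (EuclideanSpace ℝ (Fin 2)) → ℝ) (hw : ContDiffOn ℝ 1 w Ω)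
    (x v : (EuclideanSpace ℝ (Fin 2))) (h : ℝ) (hh : 0 < h) (hx : ∀ t ∈ Set.Icc 0 h, x + t • v ∈ Ω) :
    ‖w x‖ₑ ≤ ENNReal.ofReal (1 / h + ‖v‖) * 
      ∫⁻ t : ℝ, Ω.indicator (fun y => ‖w y‖ₑ + ‖fderiv ℝ w y‖ₑ) (x + t • v) := by
  have hline : Continuous (fun t : ℝ => x + t • v) := by fun_prop
  have hdw : ∀ y ∈ Ω, HasFDerivAt w (fderiv ℝ w y) y := fun y hy =>
    ((hw.contDiffAt (hO.mem_nhds hy)).differentiableAt (by norm_num)).hasFDerivAt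
  have hcf : ContinuousOn (fderiv ℝ w) Ω := hw.continuousOn_fderiv_of_isOpen hO le_rfl
  have hder : ∀ t ∈ Set.Icc 0 h,
      HasDerivAt (fun t : ℝ => w (x + t • v)) (fderiv ℝ w (x + t • v) v) t := by
    intro t ht
    have h1 : HasDerivAt (fun t : ℝ => x + t • v) v t := by
      simpa using ((hasDerivAt_id t).smul_const v).const_add x
    exact (hdw _ (hx t ht)).comp_hasDerivAt t h1
  have hc1 : ContinuousOn (fun t : ℝ => w (x + t • v)) (Set.Icc 0 h) :=
    hw.continuousOn.comp hline.continuousOn hx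
  have hc2 : ContinuousOn (fun t : ℝ => fderiv ℝ w (x + t • v)) (Set.Icc 0 h) :=
    hcf.comp hline.continuousOn hx
  have hc3 : ContinuousOn (fun t : ℝ => fderiv ℝ w (x + t • v) v) (Set.Icc 0 h) :=
    hc2.clm_apply continuousOn_const
  set D := ∫ t in (0:ℝ)..h, ‖fderiv ℝ w (x + t • v)‖ with hD
  have hi2 : IntervalIntegrable (fun t : ℝ => ‖fderiv ℝ w (x + t • v)‖) volume 0 h := by
    apply ContinuousOn.intervalIntegrable
    rw [Set.uIcc_of_le hh.le]; exact hc2.norm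
  have hi1 : IntervalIntegrable (fun t : ℝ => |w (x + t • v)|) volume 0 h := by
    apply ContinuousOn.intervalIntegrable
    rw [Set.uIcc_of_le hh.le]; exact hc1.abs
  have hpt : ∀ t ∈ Set.Icc 0 h, |w x| ≤ |w (x + t • v)| + ‖v‖ * D := by
    intro t ht
    have hsub : Set.Icc 0 t ⊆ Set.Icc 0 h := Set.Icc_subset_Icc_right ht.2
    have hii : IntervalIntegrable (fun t : ℝ => fderiv ℝ w (x + t • v) v) volume 0 t := by
      apply ContinuousOn.intervalIntegrable
      rw [Set.uIcc_of_le ht.1]; exact hc3.mono hsub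
    have hftc := intervalIntegral.integral_eq_sub_of_hasDerivAt (a := 0) (b := t)
      (f := fun t : ℝ => w (x + t • v)) (f' := fun t : ℝ => fderiv ℝ w (x + t • v) v)
      (by intro s hs; rw [Set.uIcc_of_le ht.1] at hs; exact hder s (hsub hs)) hii
    simp only [zero_smul, add_zero] at hftc
    have hb : |∫ s in (0:ℝ)..t, fderiv ℝ w (x + s • v) v| ≤ ‖v‖ * D := by
      calc |∫ s in (0:ℝ)..t, fderiv ℝ w (x + s • v) v| 
          ≤ ∫ s in (0:ℝ)..t, |fderiv ℝ w (x + s • v) v| :=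
            intervalIntegral.abs_integral_le_integral_abs ht.1
        _ ≤ ∫ s in (0:ℝ)..h, |fderiv ℝ w (x + s • v) v| := by
            apply intervalIntegral.integral_mono_interval le_rfl ht.1 ht.2
            · exact Filter.Eventually.of_forall (fun _ => abs_nonneg _)
            · apply ContinuousOn.intervalIntegrable
              rw [Set.uIcc_of_le hh.le]; exact hc3.abs
        _ ≤ ∫ s in (0:ℝ)..h, ‖v‖ * ‖fderiv ℝ w (x + s • v)‖ := by
            apply intervalIntegral.integral_mono_on hh.le
            · apply ContinuousOn.intervalIntegrable
              rw [Set.uIcc_of_le hh.le]; exact hc3.abs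
            · exact hi2.const_mul _
            · intro s hs
              rw [mul_comm]
              exact (fderiv ℝ w (x + s • v)).le_opNorm v
        _ = ‖v‖ * D := by rw [intervalIntegral.integral_const_mul]
    rw [hftc] at hb
    have := abs_sub_abs_le_abs_sub (w x) (w (x + t • v))
    rw [abs_sub_comm] at this
    linarith
  have hint : h * |w x| ≤ (∫ t in (0:ℝ)..h, |w (x + t • v)|) + h * (‖v‖ * D) := by
    have := intervalIntegral.integral_mono_on hh.le (f := fun _ => |w x|)
      (g := fun t => |w (x + t • v)| + ‖v‖ * D) (μ := volume) (by simp) 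
      (hi1.add (by simp)) hpt
    rw [intervalIntegral.integral_add hi1 (by simp)] at this
    simpa [mul_left_comm] using this
  set A := ∫ t in (0:ℝ)..h, |w (x + t • v)| with hA
  have hA0 : 0 ≤ A := intervalIntegral.integral_nonneg hh.le (fun _ _ => abs_nonneg _)
  have hD0 : 0 ≤ D := intervalIntegral.integral_nonneg hh.le (fun _ _ => norm_nonneg _)
  have hreal : |w x| ≤ (1 / h + ‖v‖) * (A + D) := by
    have h1 : |w x| ≤ A / h + ‖v‖ * D := by
      have : |w x| = (h * |w x|) / h := by field_simp
      rw [this, div_add' _ _ _ hh.ne']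
      gcongr
      linarith
    have h2 : 0 ≤ 1 / h * D := by positivity
    have h3 : 0 ≤ ‖v‖ * A := by positivity
    calc _ ≤ _ := h1
      _ ≤ _ := by ring_nf at *; linarith
  have hAD : A + D = ∫ t in Set.Icc (0:ℝ) h, (|w (x + t • v)| + ‖fderiv ℝ w (x + t • v)‖) := by
    rw [hA, hD, ← intervalIntegral.integral_add hi1 hi2, intervalIntegral.integral_of_le hh.le,
      integral_Icc_eq_integral_Ioc]
  have hle : ENNReal.ofReal (A + D) ≤
      ∫⁻ t : ℝ, Ω.indicator (fun y => ‖w y‖ₑ + ‖fderiv ℝ w y‖ₑ) (x + t • v) := by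
    rw [hAD, ofReal_integral_eq_lintegral_ofReal]
    · refine le_trans ?_ (setLIntegral_le_lintegral (Set.Icc (0:ℝ) h) _)
      apply setLIntegral_mono' measurableSet_Icc
      intro t ht
      rw [Set.indicator_of_mem (hx t ht), ENNReal.ofReal_add (abs_nonneg _) (norm_nonneg _),
        ofReal_norm, ← Real.norm_eq_abs, ofReal_norm]
    · exact ContinuousOn.integrableOn_Icc (hc1.abs.add hc2.norm)
    · exact Filter.Eventually.of_forall (fun _ => by positivity)
  rw [← ofReal_norm, Real.norm_eq_abs]
  calc ENNReal.ofReal |w x| ≤ ENNReal.ofReal ((1 / h + ‖v‖) * (A + D)) := 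
        ENNReal.ofReal_le_ofReal hreal
    _ = ENNReal.ofReal (1 / h + ‖v‖) * ENNReal.ofReal (A + D) :=
        ENNReal.ofReal_mul (by positivity)
    _ ≤ _ := by gcongr

/-- change of variables for lintegral along a basis -/
lemma aux_cov (v : Fin 2 → (EuclideanSpace ℝ (Fin 2))) (hv : LinearIndependent ℝ v) :
    ∃ c : ℝ≥0∞, c ≠ 0 ∧ c ≠ ∞ ∧ ∀ F : (EuclideanSpace ℝ (Fin 2)) → ℝ≥0∞, Measurable F →
      ∫⁻ x, F x = c * ∫⁻ p : ℝ × ℝ, F (p.1 • v 0 + p.2 • v 1) := by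
  let b : Module.Basis (Fin 2) ℝ (EuclideanSpace ℝ (Fin 2)) := basisOfLinearIndependentOfCardEqFinrank hv (by simp)
  have hb : ∀ i, b i = v i := by intro i; simp [b]
  let L : (ℝ × ℝ) ≃ₗ[ℝ] (EuclideanSpace ℝ (Fin 2)) :=
    (LinearEquiv.finTwoArrow ℝ ℝ).symm.trans b.equivFun.symm
  let L' := L.toContinuousLinearEquiv
  have hL : ∀ p : ℝ × ℝ, L' p = p.1 • v 0 + p.2 • v 1 := by
    intro p
    simp [L', L, Module.Basis.equivFun_symm_apply, hb, Fin.sum_univ_two]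
  let μ : Measure (EuclideanSpace ℝ (Fin 2)) := Measure.map L' (volume : Measure (ℝ × ℝ))
  have : μ.IsAddHaarMeasure := L'.isAddHaarMeasure_map _
  have hμ := Measure.isAddLeftInvariant_eq_smul (volume : Measure (EuclideanSpace ℝ (Fin 2))) μ
  refine ⟨Measure.addHaarScalarFactor (volume : Measure (EuclideanSpace ℝ (Fin 2))) μ, ?_, by simp, ?_⟩
  · have := Measure.addHaarScalarFactor_pos_of_isAddHaarMeasure (volume : Measure (EuclideanSpace ℝ (Fin 2))) μ
    simpa using this.ne'
  · intro F hF
    conv_lhs => rw [hμ]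
    rw [lintegral_smul_measure, lintegral_map hF L'.continuous.measurable]
    simp only [hL]
    rfl

lemma aux_local (Ω V : Set (EuclideanSpace ℝ (Fin 2))) (hO : IsOpen Ω) (hV : IsOpen V)
    (v : Fin 2 → (EuclideanSpace ℝ (Fin 2))) (hv : LinearIndependent ℝ v) (h : ℝ) (hh : 0 < h)
    (hVx : ∀ x ∈ V ∩ Ω, ∀ i, ∀ t ∈ Set.Icc 0 h, x + t • v i ∈ Ω) :
    ∃ K : ℝ≥0, ∀ w : (EuclideanSpace ℝ (Fin 2)) → ℝ, ContDiffOn ℝ 1 w Ω →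
      ∫⁻ x in V ∩ Ω, ‖w x‖ₑ ^ 2 ≤ K * (∫⁻ x in Ω, (‖w x‖ₑ + ‖fderiv ℝ w x‖ₑ)) ^ 2 := by
  obtain ⟨c, hc0, hct, hc⟩ := aux_cov v hv
  set k0 := ENNReal.ofReal (1 / h + ‖v 0‖) with hk0
  set k1 := ENNReal.ofReal (1 / h + ‖v 1‖) with hk1
  have hKt : k0 * k1 * c⁻¹ ≠ ∞ :=
    ENNReal.mul_ne_top (ENNReal.mul_ne_top ENNReal.ofReal_ne_top ENNReal.ofReal_ne_top)
      (ENNReal.inv_ne_top.2 hc0)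
  refine ⟨(k0 * k1 * c⁻¹).toNNReal, fun w hw => ?_⟩
  rw [ENNReal.coe_toNNReal hKt]
  set G : (EuclideanSpace ℝ (Fin 2)) → ℝ≥0∞ := fun y => ‖w y‖ₑ + ‖fderiv ℝ w y‖ₑ with hG
  have hcf : ContinuousOn (fderiv ℝ w) Ω := hw.continuousOn_fderiv_of_isOpen hO le_rfl
  have hGc : ContinuousOn G Ω := (hw.continuousOn.enorm).add hcf.enorm
  have hVO : MeasurableSet (V ∩ Ω) := (hV.inter hO).measurableSet
  have hFm : Measurable (Ω.indicator G) := by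
    classical
    rw [← Set.piecewise_eq_indicator]
    exact hGc.measurable_piecewise continuousOn_const hO.measurableSet
  have hWm : Measurable ((V ∩ Ω).indicator (fun x => ‖w x‖ₑ ^ 2)) := by
    classical
    rw [← Set.piecewise_eq_indicator]
    refine ContinuousOn.measurable_piecewise ?_ continuousOn_const hVO
    exact (ENNReal.continuous_pow 2).comp_continuousOn
      (hw.continuousOn.enorm.mono Set.inter_subset_right)
  set F := Ω.indicator G with hF
  have hF2 : Measurable (fun p : ℝ × ℝ => F (p.1 • v 0 + p.2 • v 1)) :=
    hFm.comp (by fun_prop)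
  set A : ℝ → ℝ≥0∞ := fun t => ∫⁻ s : ℝ, F (s • v 0 + t • v 1) with hA
  set B : ℝ → ℝ≥0∞ := fun s => ∫⁻ t : ℝ, F (s • v 0 + t • v 1) with hB
  have hAm : Measurable A := hF2.lintegral_prod_left'
  have hBm : Measurable B := hF2.lintegral_prod_right'
  have hI : ∫⁻ x in Ω, G x = ∫⁻ x, F x := (lintegral_indicator hO.measurableSet _).symm
  have hAi : ∫⁻ t, A t = c⁻¹ * ∫⁻ x, F x := by
    rw [hc F hFm, ← mul_assoc, ENNReal.inv_mul_cancel hc0 hct, one_mul]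
    exact (lintegral_prod_symm' _ hF2).symm
  have hBi : ∫⁻ t, B t = c⁻¹ * ∫⁻ x, F x := by
    rw [hc F hFm, ← mul_assoc, ENNReal.inv_mul_cancel hc0 hct, one_mul]
    exact (lintegral_prod _ hF2.aemeasurable).symm
  rw [← lintegral_indicator hVO, hc _ hWm, hI]
  have hpt : ∀ p : ℝ × ℝ, (V ∩ Ω).indicator (fun x => ‖w x‖ₑ ^ 2) (p.1 • v 0 + p.2 • v 1) ≤
      (k1 * B p.1) * (k0 * A p.2) := by
    rintro ⟨s, t⟩
    by_cases hx : s • v 0 + t • v 1 ∈ V ∩ Ω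
    · rw [Set.indicator_of_mem hx]
      have h0 := aux_segment Ω hO w hw _ (v 0) h hh (hVx _ hx 0)
      have h1 := aux_segment Ω hO w hw _ (v 1) h hh (hVx _ hx 1)
      have e0 : ∫⁻ σ : ℝ, F (s • v 0 + t • v 1 + σ • v 0) = A t := by
        refine Eq.trans ?_ (lintegral_add_left_eq_self (fun σ : ℝ => F (σ • v 0 + t • v 1)) s)
        refine lintegral_congr fun σ => congrArg F ?_
        module
      have e1 : ∫⁻ σ : ℝ, F (s • v 0 + t • v 1 + σ • v 1) = B s := by
        refine Eq.trans ?_ (lintegral_add_left_eq_self (fun σ : ℝ => F (s • v 0 + σ • v 1)) t)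
        refine lintegral_congr fun σ => congrArg F ?_
        module
      rw [e0] at h0
      rw [e1] at h1
      rw [pow_two]
      exact mul_le_mul' h1 h0
    · rw [Set.indicator_of_notMem hx]; exact zero_le
  calc c * ∫⁻ p : ℝ × ℝ, (V ∩ Ω).indicator (fun x => ‖w x‖ₑ ^ 2) (p.1 • v 0 + p.2 • v 1)
      ≤ c * ∫⁻ p : ℝ × ℝ, (k1 * B p.1) * (k0 * A p.2) := by
        gcongr with p; exact hpt p
    _ = c * ((k1 * ∫⁻ s, B s) * (k0 * ∫⁻ t, A t)) := by
        rw [Measure.volume_eq_prod, lintegral_prod_mul (f := fun s => k1 * B s)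
          (g := fun t => k0 * A t) (hBm.const_mul _).aemeasurable (hAm.const_mul _).aemeasurable,
          lintegral_const_mul _ hBm, lintegral_const_mul _ hAm]
    _ = (c * c⁻¹) * (k0 * k1 * c⁻¹ * (∫⁻ x, F x) ^ 2) := by
        rw [hAi, hBi]; ring
    _ = _ := by rw [ENNReal.mul_inv_cancel hc0 hct, one_mul]

lemma aux_li (a b : ℝ) (hab : a ≠ 0 ∨ b ≠ 0) :
    LinearIndependent ℝ (![!₂[-a - b, -b + a], !₂[-a + b, -b - a]] : Fin 2 → (EuclideanSpace ℝ (Fin 2))) := by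
  rw [LinearIndependent.pair_iff]
  intro s t hst
  have h0 := congrArg (fun z : (EuclideanSpace ℝ (Fin 2)) => z 0) hst
  have h1 := congrArg (fun z : (EuclideanSpace ℝ (Fin 2)) => z 1) hst
  simp at h0 h1
  have hpos : 0 < a ^ 2 + b ^ 2 := by
    rcases hab with h | h
    · have := pow_pos (abs_pos.2 h) 2; rw [sq_abs] at this; positivity
    · have := pow_pos (abs_pos.2 h) 2; rw [sq_abs] at this; positivity
  have e1 : (s + t) * (a ^ 2 + b ^ 2) = 0 := by linear_combination -a * h0 - b * h1
  have e2 : (s - t) * (a ^ 2 + b ^ 2) = 0 := by linear_combination -b * h0 + a * h1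
  have f1 := (mul_eq_zero.1 e1).resolve_right hpos.ne'
  have f2 := (mul_eq_zero.1 e2).resolve_right hpos.ne'
  constructor <;> linarith

/-- uniform two-direction cone condition near every point of the closure -/
lemma aux_cone (Ω : Set (EuclideanSpace ℝ (Fin 2))) (hO : IsOpen Ω)
    (hbdy : ∀ x ∈ frontier Ω, ∃ U g, IsC2LocalDefining Ω x U g) (x : (EuclideanSpace ℝ (Fin 2))) (hx : x ∈ closure Ω) :
    ∃ V : Set (EuclideanSpace ℝ (Fin 2)), IsOpen V ∧ x ∈ V ∧ ∃ v : Fin 2 → (EuclideanSpace ℝ (Fin 2)), LinearIndependent ℝ v ∧ ∃ h : ℝ, 0 < h ∧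
      ∀ y ∈ V ∩ Ω, ∀ i, ∀ t ∈ Set.Icc 0 h, y + t • v i ∈ Ω := by
  -- general shrinking device
  have key : ∀ (v : Fin 2 → (EuclideanSpace ℝ (Fin 2))) (r : ℝ), 0 < r → ∃ h : ℝ, 0 < h ∧ ∀ y ∈ Metric.ball x (r / 2),
      ∀ i, ∀ t ∈ Set.Icc 0 h, y + t • v i ∈ Metric.ball x r := by
    intro v r hr
    refine ⟨r / (2 * (‖v 0‖ + ‖v 1‖ + 1)), by positivity, ?_⟩
    intro y hy i t ht
    have hvi : ‖v i‖ ≤ ‖v 0‖ + ‖v 1‖ + 1 := by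
      have := norm_nonneg (v 0)
      have := norm_nonneg (v 1)
      fin_cases i <;> simp <;> linarith
    rw [Metric.mem_ball, dist_eq_norm] at hy ⊢
    have h1 : ‖t • v i‖ ≤ r / 2 := by
      rw [norm_smul, Real.norm_of_nonneg ht.1]
      calc t * ‖v i‖ ≤ r / (2 * (‖v 0‖ + ‖v 1‖ + 1)) * (‖v 0‖ + ‖v 1‖ + 1) := by
            have := ht.2
            have := ht.1
            gcongr
        _ = r / 2 := by field_simp
    calc ‖y + t • v i - x‖ = ‖(y - x) + t • v i‖ := by congr 1; abel
      _ ≤ ‖y - x‖ + ‖t • v i‖ := norm_add_le _ _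
      _ < r := by linarith
  by_cases hxO : x ∈ Ω
  · obtain ⟨r, hr, hball⟩ := Metric.isOpen_iff.1 hO x hxO
    obtain ⟨h, hh, hk⟩ := key _ r hr
    exact ⟨Metric.ball x (r / 2), Metric.isOpen_ball, Metric.mem_ball_self (by positivity), _,
      aux_li 1 0 (Or.inl one_ne_zero), h, hh, fun y hy i t ht => hball (hk y hy.1 i t ht)⟩
  · have hxf : x ∈ frontier Ω := by
      rw [hO.frontier_eq]; exact ⟨hx, hxO⟩
    obtain ⟨U, g, hU, hxU, hg, hgrad, hΩU⟩ := hbdy x hxf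
    have hdiff : ∀ y ∈ U, DifferentiableAt ℝ g y := fun y hy =>
      (hg.contDiffAt (hU.mem_nhds hy)).differentiableAt (by norm_num)
    have hcf : ContinuousOn (fderiv ℝ g) U := hg.continuousOn_fderiv_of_isOpen hU (by norm_num)
    set n : (EuclideanSpace ℝ (Fin 2)) := gradient g x with hn
    have hfd : ∀ z, fderiv ℝ g x z = inner ℝ n z := by
      intro z
      have := (hdiff x hxU).hasGradientAt.hasFDerivAt.fderiv
      rw [this]; simp [hn]
    have hn0 : n 0 ≠ 0 ∨ n 1 ≠ 0 := by
      by_contra hcon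
      push Not at hcon
      apply hgrad x hxU
      ext i
      fin_cases i
      · simpa using hcon.1
      · simpa using hcon.2
    set v : Fin 2 → (EuclideanSpace ℝ (Fin 2)) := ![!₂[-n 0 - n 1, -n 1 + n 0], !₂[-n 0 + n 1, -n 1 - n 0]] with hv
    have hpos : 0 < n 0 ^ 2 + n 1 ^ 2 := by
      rcases hn0 with h | h
      · have := pow_pos (abs_pos.2 h) 2; rw [sq_abs] at this; positivity
      · have := pow_pos (abs_pos.2 h) 2; rw [sq_abs] at this; positivity
    have hneg : ∀ i, fderiv ℝ g x (v i) < 0 := by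
      intro i
      rw [hfd, PiLp.inner_apply, Fin.sum_univ_two]
      fin_cases i <;> simp [hv] <;> nlinarith
    have hev : ∀ᶠ y in nhds x, y ∈ U ∧ ∀ i, fderiv ℝ g y (v i) < 0 := by
      refine Filter.Eventually.and (hU.mem_nhds hxU) ?_
      rw [Filter.eventually_all]
      intro i
      have hca : ContinuousAt (fun y => fderiv ℝ g y (v i)) x :=
        (hcf.continuousAt (hU.mem_nhds hxU)).clm_apply continuousAt_const
      exact hca.eventually_lt continuousAt_const (hneg i)
    obtain ⟨r, hr, hball⟩ := Metric.eventually_nhds_iff_ball.1 hev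
    obtain ⟨h, hh, hk⟩ := key v r hr
    refine ⟨Metric.ball x (r / 2), Metric.isOpen_ball, Metric.mem_ball_self (by positivity), v,
      aux_li _ _ hn0, h, hh, ?_⟩
    intro y hy i t ht
    have hder : ∀ s ∈ Set.Icc 0 h,
        HasDerivAt (fun t : ℝ => g (y + t • v i)) (fderiv ℝ g (y + s • v i) (v i)) s := by
      intro s hs
      have h1 : HasDerivAt (fun t : ℝ => y + t • v i) (v i) s := by
        simpa using ((hasDerivAt_id s).smul_const (v i)).const_add y
      exact (hdiff _ (hball _ (hk y hy.1 i s hs)).1).hasFDerivAt.comp_hasDerivAt s h1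
    have hanti : AntitoneOn (fun t : ℝ => g (y + t • v i)) (Set.Icc 0 h) := by
      apply antitoneOn_of_deriv_nonpos (convex_Icc 0 h)
      · exact fun s hs => (hder s hs).continuousAt.continuousWithinAt
      · exact fun s hs => (hder s (interior_subset hs)).differentiableAt.differentiableWithinAt
      · intro s hs
        rw [(hder s (interior_subset hs)).deriv]
        exact ((hball _ (hk y hy.1 i s (interior_subset hs))).2 i).le
    have hyU : y ∈ U := (hball y (Metric.ball_subset_ball (by linarith) hy.1)).1
    have hgy : g y < 0 := by
      have : y ∈ Ω ∩ U := ⟨hy.2, hyU⟩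
      rw [hΩU] at this
      exact this.2
    have hgt : g (y + t • v i) ≤ g y := by
      have := hanti (Set.left_mem_Icc.2 hh.le) ht ht.1
      simpa using this
    have : y + t • v i ∈ Ω ∩ U := by
      rw [hΩU]
      exact ⟨(hball _ (hk y hy.1 i t ht)).1, lt_of_le_of_lt hgt hgy⟩
    exact this.1

/-- The embedding of `W^{1,1}` into `L²` on `Ω`. -/
lemma aux_global (Ω : Set (EuclideanSpace ℝ (Fin 2))) (hO : IsOpen Ω) (hB : IsBounded Ω)
    (hbdy : ∀ x ∈ frontier Ω, ∃ U g, IsC2LocalDefining Ω x U g) :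
    ∃ K : ℝ≥0, ∀ w : (EuclideanSpace ℝ (Fin 2)) → ℝ, ContDiffOn ℝ 1 w Ω →
      ∫⁻ x in Ω, ‖w x‖ₑ ^ 2 ≤ K * (∫⁻ x in Ω, (‖w x‖ₑ + ‖fderiv ℝ w x‖ₑ)) ^ 2 := by
  have hcomp : IsCompact (closure Ω) := hB.isCompact_closure
  have := hcomp.induction_on (p := fun S => ∃ K : ℝ≥0, ∀ w : (EuclideanSpace ℝ (Fin 2)) → ℝ, ContDiffOn ℝ 1 w Ω →
      ∫⁻ x in S ∩ Ω, ‖w x‖ₑ ^ 2 ≤ K * (∫⁻ x in Ω, (‖w x‖ₑ + ‖fderiv ℝ w x‖ₑ)) ^ 2)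
    ⟨0, by intro w hw; simp⟩ 
    (by
      rintro S T hST ⟨K, hK⟩
      exact ⟨K, fun w hw => (lintegral_mono_set (Set.inter_subset_inter_left _ hST)).trans (hK w hw)⟩)
    (by
      rintro S T ⟨K, hK⟩ ⟨K', hK'⟩
      refine ⟨K + K', fun w hw => ?_⟩
      rw [Set.union_inter_distrib_right, ENNReal.coe_add, add_mul]
      exact (lintegral_union_le _ _ _).trans (add_le_add (hK w hw) (hK' w hw)))
    (by
      intro x hx
      obtain ⟨V, hV, hxV, v, hv, h, hh, hVx⟩ := aux_cone Ω hO hbdy x hx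
      exact ⟨V, mem_nhdsWithin_of_mem_nhds (hV.mem_nhds hxV), aux_local Ω V hO hV v hv h hh hVx⟩)
  simpa [Set.inter_eq_right.2 (subset_closure (s := Ω))] using this

lemma aux_CS (Ω : Set (EuclideanSpace ℝ (Fin 2))) (f g : (EuclideanSpace ℝ (Fin 2)) → ℝ≥0∞) (hf : AEMeasurable f (volume.restrict Ω))
    (hg : AEMeasurable g (volume.restrict Ω)) :
    (∫⁻ x in Ω, f x * g x) ^ 2 ≤ (∫⁻ x in Ω, f x ^ 2) * ∫⁻ x in Ω, g x ^ 2 := by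
  have h := ENNReal.lintegral_mul_le_Lp_mul_Lq (volume.restrict Ω)
    Real.HolderConjugate.two_two hf hg
  have h2 := pow_le_pow_left' h 2
  have e : ∀ a : ℝ≥0∞, (a ^ ((1:ℝ) / 2)) ^ 2 = a := by
    intro a
    rw [← ENNReal.rpow_natCast, ← ENNReal.rpow_mul]; norm_num
  rw [mul_pow, e, e] at h2
  simpa using h2

lemma aux_moment_step (Ω : Set (EuclideanSpace ℝ (Fin 2))) (hO : IsOpen Ω) (K : ℝ≥0)
    (hK : ∀ w : (EuclideanSpace ℝ (Fin 2)) → ℝ, ContDiffOn ℝ 1 w Ω →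
      ∫⁻ x in Ω, ‖w x‖ₑ ^ 2 ≤ K * (∫⁻ x in Ω, (‖w x‖ₑ + ‖fderiv ℝ w x‖ₑ)) ^ 2)
    (u : (EuclideanSpace ℝ (Fin 2)) → ℝ) (hu : ContDiffOn ℝ 1 u Ω) (p : ℕ) :
    ∫⁻ x in Ω, ‖u x‖ₑ ^ (2 * (p + 1)) ≤ (2 * K) * (p + 1) ^ 2 * 
      (∫⁻ x in Ω, (‖u x‖ₑ ^ 2 + ‖fderiv ℝ u x‖ₑ ^ 2)) * ∫⁻ x in Ω, ‖u x‖ₑ ^ (2 * p) := by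
  have hcf : ContinuousOn (fderiv ℝ u) Ω := hu.continuousOn_fderiv_of_isOpen hO le_rfl
  have hm1 : AEMeasurable (fun x => ‖u x‖ₑ) (volume.restrict Ω) :=
    hu.continuousOn.enorm.aemeasurable hO.measurableSet
  have hm2 : AEMeasurable (fun x => ‖fderiv ℝ u x‖ₑ) (volume.restrict Ω) :=
    hcf.enorm.aemeasurable hO.measurableSet
  have h1 := hK (fun x => u x ^ (p + 1)) (hu.pow (p + 1))
  have hl : ∫⁻ x in Ω, ‖u x ^ (p + 1)‖ₑ ^ 2 = ∫⁻ x in Ω, ‖u x‖ₑ ^ (2 * (p + 1)) := by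
    refine lintegral_congr fun x => ?_
    rw [enorm_pow, ← pow_mul, mul_comm 2]
  have hr : ∫⁻ x in Ω, (‖u x ^ (p + 1)‖ₑ + ‖fderiv ℝ (fun x => u x ^ (p + 1)) x‖ₑ) =
      ∫⁻ x in Ω, ‖u x‖ₑ ^ p * (‖u x‖ₑ + (p + 1) * ‖fderiv ℝ u x‖ₑ) := by
    refine setLIntegral_congr_fun hO.measurableSet fun x hx => ?_
    have hd : DifferentiableAt ℝ u x :=
      (hu.contDiffAt (hO.mem_nhds hx)).differentiableAt (by norm_num)
    have : fderiv ℝ (fun x => u x ^ (p + 1)) x = (((p + 1 : ℕ) : ℝ) * u x ^ p) • fderiv ℝ u x := by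
      rw [fderiv_fun_pow (p + 1) hd]; simp
    have e : ‖((p + 1 : ℕ) : ℝ)‖ₑ = (p + 1 : ℝ≥0∞) := by
      rw [← ofReal_norm, Real.norm_natCast, ENNReal.ofReal_natCast]; push_cast; rfl
    simp only [this, enorm_smul, enorm_mul, enorm_pow, e]
    ring
  rw [hl, hr] at h1
  refine h1.trans ?_
  have h2 := aux_CS Ω (fun x => ‖u x‖ₑ ^ p) (fun x => ‖u x‖ₑ + (p + 1) * ‖fderiv ℝ u x‖ₑ)
    (hm1.pow_const p) (hm1.add (hm2.const_mul _))
  have h3 : ∫⁻ x in Ω, (‖u x‖ₑ + (p + 1) * ‖fderiv ℝ u x‖ₑ) ^ 2 ≤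
      (2 * (p + 1) ^ 2) * ∫⁻ x in Ω, (‖u x‖ₑ ^ 2 + ‖fderiv ℝ u x‖ₑ ^ 2) := by
    rw [← lintegral_const_mul' _ _ (by finiteness)]
    refine lintegral_mono fun x => ?_
    have a1 : ‖u x‖ₑ + (p + 1) * ‖fderiv ℝ u x‖ₑ ≤ (p + 1) * (‖u x‖ₑ + ‖fderiv ℝ u x‖ₑ) := by
      rw [mul_add]
      gcongr
      calc ‖u x‖ₑ = 1 * ‖u x‖ₑ := (one_mul _).symm
        _ ≤ _ := by gcongr; exact le_add_self
    have a2 : (‖u x‖ₑ + ‖fderiv ℝ u x‖ₑ) ^ 2 ≤ 2 * (‖u x‖ₑ ^ 2 + ‖fderiv ℝ u x‖ₑ ^ 2) := by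
      rw [enorm_eq_nnnorm, enorm_eq_nnnorm]
      norm_cast
      exact add_sq_le
    calc _ ≤ ((p + 1) * (‖u x‖ₑ + ‖fderiv ℝ u x‖ₑ)) ^ 2 := by gcongr
      _ = (p + 1) ^ 2 * (‖u x‖ₑ + ‖fderiv ℝ u x‖ₑ) ^ 2 := by ring
      _ ≤ (p + 1) ^ 2 * (2 * (‖u x‖ₑ ^ 2 + ‖fderiv ℝ u x‖ₑ ^ 2)) := by gcongr
      _ = _ := by ring
  have h4 : ∫⁻ x in Ω, (‖u x‖ₑ ^ p) ^ 2 = ∫⁻ x in Ω, ‖u x‖ₑ ^ (2 * p) := by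
    refine lintegral_congr fun x => ?_
    rw [← pow_mul, mul_comm 2]
  rw [h4] at h2
  calc _ ≤ K * ((∫⁻ x in Ω, ‖u x‖ₑ ^ (2 * p)) * ((2 * (p + 1) ^ 2) *
        ∫⁻ x in Ω, (‖u x‖ₑ ^ 2 + ‖fderiv ℝ u x‖ₑ ^ 2))) := by
        gcongr
        exact h2.trans (by gcongr)
    _ = _ := by ring

lemma aux_moment (Ω : Set (EuclideanSpace ℝ (Fin 2))) (hO : IsOpen Ω) (K : ℝ≥0)
    (hK : ∀ w : (EuclideanSpace ℝ (Fin 2)) → ℝ, ContDiffOn ℝ 1 w Ω →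
      ∫⁻ x in Ω, ‖w x‖ₑ ^ 2 ≤ K * (∫⁻ x in Ω, (‖w x‖ₑ + ‖fderiv ℝ w x‖ₑ)) ^ 2)
    (u : (EuclideanSpace ℝ (Fin 2)) → ℝ) (hu : ContDiffOn ℝ 1 u Ω) (p : ℕ) :
    ∫⁻ x in Ω, ‖u x‖ₑ ^ (2 * (p + 1)) ≤ (2 * K + 1) ^ (p + 1) * ((p + 1).factorial : ℝ≥0∞) ^ 2 * 
      (∫⁻ x in Ω, (‖u x‖ₑ ^ 2 + ‖fderiv ℝ u x‖ₑ ^ 2)) ^ (p + 1) := by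
  induction p with
  | zero =>
    simp only [zero_add, mul_one, pow_one, Nat.factorial_one, Nat.cast_one, one_pow]
    calc ∫⁻ x in Ω, ‖u x‖ₑ ^ 2 ≤ 1 * ∫⁻ x in Ω, (‖u x‖ₑ ^ 2 + ‖fderiv ℝ u x‖ₑ ^ 2) := by
          rw [one_mul]
          exact lintegral_mono fun x => le_self_add
      _ ≤ _ := by gcongr; exact le_add_self
  | succ p ih =>
    refine (aux_moment_step Ω hO K hK u hu (p + 1)).trans ?_
    set T := ∫⁻ x in Ω, (‖u x‖ₑ ^ 2 + ‖fderiv ℝ u x‖ₑ ^ 2)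
    calc _ ≤ (2 * K + 1) * ((p + 1 : ℕ) + 1) ^ 2 * T * ((2 * K + 1) ^ (p + 1) * 
            ((p + 1).factorial : ℝ≥0∞) ^ 2 * T ^ (p + 1)) := by
          gcongr; exact le_self_add
      _ = _ := by
          rw [Nat.factorial_succ (p + 1)]; push_cast; ring

lemma aux_moment_all (Ω : Set (EuclideanSpace ℝ (Fin 2))) (hO : IsOpen Ω) (K : ℝ≥0)
    (hK : ∀ w : (EuclideanSpace ℝ (Fin 2)) → ℝ, ContDiffOn ℝ 1 w Ω →
      ∫⁻ x in Ω, ‖w x‖ₑ ^ 2 ≤ K * (∫⁻ x in Ω, (‖w x‖ₑ + ‖fderiv ℝ w x‖ₑ)) ^ 2)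
    (u : (EuclideanSpace ℝ (Fin 2)) → ℝ) (hu : ContDiffOn ℝ 1 u Ω) (k : ℕ) :
    (∫⁻ x in Ω, ‖u x‖ₑ ^ (k + 3)) ^ 2 ≤ (2 * K + 1) ^ (k + 3) * ((k + 3).factorial : ℝ≥0∞) ^ 2 * 
      (∫⁻ x in Ω, (‖u x‖ₑ ^ 2 + ‖fderiv ℝ u x‖ₑ ^ 2)) ^ (k + 3) := by
  obtain ⟨i, j, hij⟩ : ∃ i j : ℕ, k + 3 = (i + 1) + (j + 1) := ⟨k, 1, by ring⟩
  have hm1 : AEMeasurable (fun x => ‖u x‖ₑ) (volume.restrict Ω) :=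
    hu.continuousOn.enorm.aemeasurable hO.measurableSet
  have h1 := aux_CS Ω (fun x => ‖u x‖ₑ ^ (i + 1)) (fun x => ‖u x‖ₑ ^ (j + 1))
    (hm1.pow_const _) (hm1.pow_const _)
  simp only [← pow_add, ← pow_mul, ← hij] at h1
  rw [mul_comm (i + 1), mul_comm (j + 1)] at h1
  have hi := aux_moment Ω hO K hK u hu i
  have hj := aux_moment Ω hO K hK u hu j
  refine h1.trans ((mul_le_mul' hi hj).trans ?_)
  have hf : (i + 1).factorial * (j + 1).factorial ≤ (k + 3).factorial := by
    rw [hij]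
    exact Nat.le_of_dvd (Nat.factorial_pos _) (Nat.factorial_mul_factorial_dvd_factorial_add _ _)
  have hf' : ((i + 1).factorial : ℝ≥0∞) * (j + 1).factorial ≤ (k + 3).factorial := by
    exact_mod_cast hf
  set T := ∫⁻ x in Ω, (‖u x‖ₑ ^ 2 + ‖fderiv ℝ u x‖ₑ ^ 2)
  calc _ = (2 * K + 1 : ℝ≥0∞) ^ (k + 3) * (((i + 1).factorial : ℝ≥0∞) * (j + 1).factorial) ^ 2 * 
        T ^ (k + 3) := by rw [hij]; ring
    _ ≤ _ := by gcongr

lemma aux_fderiv_bdd (Ω : Set (EuclideanSpace ℝ (Fin 2))) (hO : IsOpen Ω) (hB : IsBounded Ω) (u : (EuclideanSpace ℝ (Fin 2)) → ℝ)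
    (hu : ContDiffOn ℝ 1 u (closure Ω)) : ∃ B : ℝ, ∀ y ∈ Ω, ‖fderiv ℝ u y‖ ≤ B := by
  have := hB.isCompact_closure.induction_on 
    (p := fun S => ∃ B : ℝ, ∀ y ∈ S ∩ Ω, ‖fderiv ℝ u y‖ ≤ B) ⟨0, by simp⟩
    (by
      rintro S T hST ⟨B, hB⟩
      exact ⟨B, fun y hy => hB y ⟨hST hy.1, hy.2⟩⟩)
    (by
      rintro S T ⟨B, hB⟩ ⟨B', hB'⟩
      refine ⟨max B B', fun y hy => ?_⟩
      rcases hy.1 with h | h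
      · exact (hB y ⟨h, hy.2⟩).trans (le_max_left _ _)
      · exact (hB' y ⟨h, hy.2⟩).trans (le_max_right _ _))
    (by
      intro x hx
      have h1 : ContDiffWithinAt ℝ (0 + 1) u (closure Ω) x := by simpa using hu x hx
      rw [contDiffWithinAt_succ_iff_hasFDerivWithinAt' (by simp)] at h1
      obtain ⟨s, hs, hss, -, f', hf', hcd⟩ := h1
      rw [Set.insert_eq_of_mem hx] at hs hss
      have hcont : ContinuousWithinAt f' (closure Ω) x := by
        simpa [Set.insert_eq_of_mem hx] using hcd.continuousWithinAt
      have hev : ∀ᶠ y in nhdsWithin x (closure Ω), ‖f' y‖ < ‖f' x‖ + 1 :=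
        hcont.norm.eventually (gt_mem_nhds (by linarith))
      refine ⟨s ∩ {y | ‖f' y‖ < ‖f' x‖ + 1}, Filter.inter_mem hs hev, ‖f' x‖ + 1, ?_⟩
      rintro y ⟨⟨hys, hyb⟩, hyO⟩
      have : HasFDerivAt u (f' y) y := (hf' y hys).hasFDerivAt
        (Filter.mem_of_superset (hO.mem_nhds hyO) subset_closure)
      rw [this.fderiv]
      exact le_of_lt hyb)
  obtain ⟨B, hB⟩ := this
  exact ⟨B, fun y hy => hB y ⟨subset_closure hy, hy⟩⟩

lemma aux_exp_tail (a : ℝ) :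
    HasSum (fun k : ℕ => (1 / ((k + 3).factorial : ℝ)) * a ^ (k + 3))
      (Real.exp a - 1 - a - a ^ 2 / 2) := by
  have h := NormedSpace.expSeries_div_hasSum_exp a
  rw [← Real.exp_eq_exp_ℝ] at h
  have h3 := (hasSum_nat_add_iff' 3).2 h
  have e : Real.exp a - ∑ i ∈ Finset.range 3, a ^ i / (i.factorial : ℝ) =
      Real.exp a - 1 - a - a ^ 2 / 2 := by
    simp [Finset.sum_range_succ, Nat.factorial]; ring
  rw [e] at h3
  have e2 : (fun k : ℕ => (1 / ((k + 3).factorial : ℝ)) * a ^ (k + 3)) =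
      fun k : ℕ => a ^ (k + 3) / ((k + 3).factorial : ℝ) := by
    funext k; ring
  rw [e2]
  exact h3

lemma aux_real (Ω : Set (EuclideanSpace ℝ (Fin 2))) (hO : IsOpen Ω) (hB : IsBounded Ω) (K : ℝ≥0)
    (hK : ∀ w : (EuclideanSpace ℝ (Fin 2)) → ℝ, ContDiffOn ℝ 1 w Ω →
      ∫⁻ x in Ω, ‖w x‖ₑ ^ 2 ≤ K * (∫⁻ x in Ω, (‖w x‖ₑ + ‖fderiv ℝ w x‖ₑ)) ^ 2)
    (u : (EuclideanSpace ℝ (Fin 2)) → ℝ) (hu : ContDiffOn ℝ 1 u (closure Ω)) (k : ℕ) :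
    ∫ x in Ω, |u x| ^ (k + 3) ≤
      ((2 * K + 1) * H1norm Ω u) ^ (k + 3) * ((k + 3).factorial : ℝ) := by
  have hu' : ContDiffOn ℝ 1 u Ω := hu.mono subset_closure
  have hcf : ContinuousOn (fderiv ℝ u) Ω := hu'.continuousOn_fderiv_of_isOpen hO le_rfl
  have hcomp := hB.isCompact_closure
  have hi : ∀ m : ℕ, IntegrableOn (fun x => |u x| ^ m) Ω := fun m =>
    ((hu.continuousOn.abs.pow m).integrableOn_compact hcomp).mono_set subset_closure
  have hi2 : IntegrableOn (fun x => u x ^ 2) Ω := by simpa using hi 2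
  obtain ⟨B, hBd⟩ := aux_fderiv_bdd Ω hO hB u hu
  have hfin : volume Ω ≠ ∞ := hB.measure_lt_top.ne
  have hid : IntegrableOn (fun x => ‖fderiv ℝ u x‖ ^ 2) Ω := by
    refine Measure.integrableOn_of_bounded (M := B ^ 2) hfin
      ((measurable_fderiv ℝ u).norm.pow_const 2).aestronglyMeasurable ?_
    refine (ae_restrict_iff' hO.measurableSet).2 (Filter.Eventually.of_forall fun x hx => ?_)
    rw [Real.norm_of_nonneg (by positivity)]
    exact pow_le_pow_left₀ (norm_nonneg _) (hBd x hx) 2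
  have hgr : ∀ x, ‖gradient u x‖ = ‖fderiv ℝ u x‖ := by intro x; simp [gradient]
  set H := H1norm Ω u with hH
  have hH0 : 0 ≤ H := Real.sqrt_nonneg _
  have hHsq : H ^ 2 = ∫ x in Ω, (u x ^ 2 + ‖fderiv ℝ u x‖ ^ 2) := by
    rw [hH, H1norm, Real.sq_sqrt, integral_add hi2 hid]
    · simp only [hgr]
    · exact add_nonneg (integral_nonneg fun _ => by positivity)
        (integral_nonneg fun _ => by positivity)
  have hT : ∫⁻ x in Ω, (‖u x‖ₑ ^ 2 + ‖fderiv ℝ u x‖ₑ ^ 2) = ENNReal.ofReal (H ^ 2) := by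
    rw [hHsq, ofReal_integral_eq_lintegral_ofReal
      (f := fun x => u x ^ 2 + ‖fderiv ℝ u x‖ ^ 2) (μ := volume.restrict Ω) (Integrable.add (f := fun x => u x ^ 2) (g := fun x => ‖fderiv ℝ u x‖ ^ 2) hi2 hid)
      (Filter.Eventually.of_forall fun _ => by positivity)]
    refine lintegral_congr fun x => ?_
    rw [ENNReal.ofReal_add (by positivity) (by positivity), ENNReal.ofReal_pow (norm_nonneg _),
      ofReal_norm, ← sq_abs, ENNReal.ofReal_pow (abs_nonneg _), ← Real.norm_eq_abs, ofReal_norm]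
  have hL : ∫⁻ x in Ω, ‖u x‖ₑ ^ (k + 3) = ENNReal.ofReal (∫ x in Ω, |u x| ^ (k + 3)) := by
    rw [ofReal_integral_eq_lintegral_ofReal (hi _)
      (Filter.Eventually.of_forall fun _ => by positivity)]
    refine lintegral_congr fun x => ?_
    rw [ENNReal.ofReal_pow (abs_nonneg _), ← Real.norm_eq_abs, ofReal_norm]
  have hmain := aux_moment_all Ω hO K hK u hu' k
  rw [hT, hL] at hmain
  have hc : (2 * K + 1 : ℝ≥0∞) = ENNReal.ofReal (2 * K + 1) := by
    rw [ENNReal.ofReal_add (by positivity) zero_le_one, ENNReal.ofReal_mul zero_le_two]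
    simp
  have hI0 : 0 ≤ ∫ x in Ω, |u x| ^ (k + 3) := integral_nonneg fun _ => by positivity
  set L : ℝ := 2 * K + 1 with hLd
  have hL1 : 1 ≤ L := by rw [hLd]; linarith [K.coe_nonneg]
  rw [hc, ← ENNReal.ofReal_natCast, ← ENNReal.ofReal_pow (by positivity),
    ← ENNReal.ofReal_pow (by positivity), ← ENNReal.ofReal_pow (by positivity),
    ← ENNReal.ofReal_pow (by positivity), ← ENNReal.ofReal_mul (by positivity),
    ← ENNReal.ofReal_mul (by positivity), ENNReal.ofReal_le_ofReal_iff (by positivity)] at hmain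
  refine (sq_le_sq₀ hI0 (by positivity)).1 (hmain.trans ?_)
  calc L ^ (k + 3) * ((k + 3).factorial : ℝ) ^ 2 * (H ^ 2) ^ (k + 3)
      ≤ (L ^ 2) ^ (k + 3) * ((k + 3).factorial : ℝ) ^ 2 * (H ^ 2) ^ (k + 3) := by
        gcongr; nlinarith
    _ = _ := by rw [mul_pow]; ring

/-- For a bounded open `Ω ⊆ ℝ²` with `C²` boundary there are constants
`C > 0` and `s₀ > 0` depending only on `Ω` such that every `u` of class `C¹` on
`closure Ω` with `‖u‖_{H¹} ≤ s₀` satisfies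
`∑_{k=3}^∞ (1/k!) ∫_Ω |u|^k ≤ C ‖u‖_{H¹}³`, and in particular
`|∫_Ω (e^u - 1 - u - u²/2)| ≤ C ‖u‖_{H¹}³`. -/
theorem stmt_18 (Ω : Set (EuclideanSpace ℝ (Fin 2))) (hΩ_open : IsOpen Ω)
    (hΩ_bdd : IsBounded Ω)
    (hΩ_bdy : ∀ x ∈ frontier Ω, ∃ U g, IsC2LocalDefining Ω x U g) :
    ∃ C : ℝ, 0 < C ∧ ∃ s₀ : ℝ, 0 < s₀ ∧
      ∀ u : EuclideanSpace ℝ (Fin 2) → ℝ, ContDiffOn ℝ 1 u (closure Ω) →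
        H1norm Ω u ≤ s₀ →
        (∑' k : ℕ, (1 / ((k + 3).factorial : ℝ)) * ∫ x in Ω, |u x| ^ (k + 3)) ≤
            C * H1norm Ω u ^ 3 ∧
        |∫ x in Ω, (Real.exp (u x) - 1 - u x - u x ^ 2 / 2)| ≤ C * H1norm Ω u ^ 3 := by
  obtain ⟨K, hK⟩ := aux_global Ω hΩ_open hΩ_bdd hΩ_bdy
  set L : ℝ := 2 * K + 1 with hLd
  have hL1 : 1 ≤ L := by rw [hLd]; linarith [K.coe_nonneg]
  refine ⟨2 * L ^ 3, by positivity, 1 / (2 * L), by positivity, fun u hu hs => ?_⟩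
  set H := H1norm Ω u with hH
  have hH0 : 0 ≤ H := Real.sqrt_nonneg _
  have hq : L * H ≤ 1 / 2 := by
    calc L * H ≤ L * (1 / (2 * L)) := by gcongr
      _ = 1 / 2 := by field_simp
  have hq0 : 0 ≤ L * H := by positivity
  have hterm : ∀ k : ℕ, (1 / ((k + 3).factorial : ℝ)) * ∫ x in Ω, |u x| ^ (k + 3) ≤
      (L * H) ^ 3 * (1 / 2) ^ k := by
    intro k
    have h := aux_real Ω hΩ_open hΩ_bdd K hK u hu k
    have hf : (0 : ℝ) < ((k + 3).factorial : ℝ) := by exact_mod_cast Nat.factorial_pos _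
    calc _ ≤ (1 / ((k + 3).factorial : ℝ)) * ((L * H) ^ (k + 3) * ((k + 3).factorial : ℝ)) := by
          gcongr
      _ = (L * H) ^ 3 * (L * H) ^ k := by field_simp; ring
      _ ≤ _ := by gcongr
  have hnn : ∀ k : ℕ, 0 ≤ (1 / ((k + 3).factorial : ℝ)) * ∫ x in Ω, |u x| ^ (k + 3) := fun k =>
    mul_nonneg (by positivity) (integral_nonneg fun _ => by positivity)
  have hgeo : HasSum (fun k : ℕ => (L * H) ^ 3 * (1 / 2 : ℝ) ^ k) ((L * H) ^ 3 * 2) :=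
    hasSum_geometric_two.mul_left _
  have hsum : Summable (fun k : ℕ => (1 / ((k + 3).factorial : ℝ)) * ∫ x in Ω, |u x| ^ (k + 3)) :=
    Summable.of_nonneg_of_le hnn hterm hgeo.summable
  have hfirst : (∑' k : ℕ, (1 / ((k + 3).factorial : ℝ)) * ∫ x in Ω, |u x| ^ (k + 3)) ≤
      2 * L ^ 3 * H ^ 3 := by
    calc _ ≤ (L * H) ^ 3 * 2 := by
          rw [← hgeo.tsum_eq]; exact hsum.tsum_le_tsum hterm hgeo.summable
      _ = _ := by ring
  refine ⟨hfirst, le_trans ?_ hfirst⟩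
  have hi : ∀ k : ℕ, Integrable (fun x => (1 / ((k + 3).factorial : ℝ)) * u x ^ (k + 3))
      (volume.restrict Ω) := fun k =>
    (((hu.continuousOn.pow (k + 3)).integrableOn_compact hΩ_bdd.isCompact_closure).mono_set
      subset_closure).const_mul _
  have hnorm : ∀ k : ℕ, ∫ x in Ω, ‖(1 / ((k + 3).factorial : ℝ)) * u x ^ (k + 3)‖ =
      (1 / ((k + 3).factorial : ℝ)) * ∫ x in Ω, |u x| ^ (k + 3) := by
    intro k
    rw [← integral_const_mul]
    refine integral_congr_ae (Filter.Eventually.of_forall fun x => ?_)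
    simp
  have hS := hasSum_integral_of_summable_integral_norm hi (by simpa only [hnorm] using hsum)
  simp only [(aux_exp_tail _).tsum_eq] at hS
  rw [← hS.tsum_eq, ← Real.norm_eq_abs]
  refine tsum_of_norm_bounded hsum.hasSum fun k => ?_
  rw [← hnorm]
  exact norm_integral_le_integral_norm _
end
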